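/- Let X be a real-valued random variable with unbounded distribution F and Y a nonnegative random variable with distribution G, neither degenerate at zero, and let H be the distribution of XY. Suppose (X,Y) satisfies Assumption 1 (there is a measurable function h:[0,∞)→(0,∞) such that P(X>x | Y=y) ~ h(y)P(X>x) as x→∞ uniformly in y≥0) and Assumption 2 (Ḡ(bx)=o(H̄(x)) as x→∞ for every constant b>0). If F belongs to the class S(γ) for some γ≥0, then H belongs to S(γ/β_G), where β_G=sup{y:G(y)<1}∈(0,∞] is the right endpoint of G and γ/β_G is understood as 0 when β_G=∞. -/

import Mathlib

open MeasureTheory ProbabilityTheory Filter Set Asymptotics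

noncomputable section

/-- The tail (survival) function `x ↦ P(Z > x)` of a random variable `Z`. -/
def rvTail {Ω : Type*} [MeasureSpace Ω] (Z : Ω → ℝ) (x : ℝ) : ℝ :=
  (ℙ {ω | x < Z ω}).toReal

/-- The cumulative distribution function `x ↦ P(Z ≤ x)` of a random variable `Z`. -/
def rvCdf {Ω : Type*} [MeasureSpace Ω] (Z : Ω → ℝ) (x : ℝ) : ℝ :=
  (ℙ {ω | Z ω ≤ x}).toReal

/-- The left limit of the cdf, `G(y-) = P(Z < y)`. -/
def rvCdfLeft {Ω : Type*} [MeasureSpace Ω] (Z : Ω → ℝ) (y : ℝ) : ℝ :=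
  (ℙ {ω | Z ω < y}).toReal

/-- The distribution of `Z` is unbounded (above): its tail is positive for every `x > 0`. -/
def UnboundedDist {Ω : Type*} [MeasureSpace Ω] (Z : Ω → ℝ) : Prop :=
  ∀ x > 0, 0 < rvTail Z x

/-- The support `D_Z = {y : P(Z ∈ (y - δ, y + δ)) > 0 for all δ > 0}` of the
distribution of `Z`. -/
def distSupport {Ω : Type*} [MeasureSpace Ω] (Z : Ω → ℝ) : Set ℝ :=
  {y | ∀ δ > 0, 0 < ℙ {ω | Z ω ∈ Ioo (y - δ) (y + δ)}}

/-- The distribution of `Z` belongs to the class `L(γ)`: it is unbounded above and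
`P(Z > x - t) ~ e^{γ t} P(Z > x)` as `x → ∞`, for every `t > 0`. -/
def MemLGamma {Ω : Type*} [MeasureSpace Ω] (Z : Ω → ℝ) (γ : ℝ) : Prop :=
  UnboundedDist Z ∧
    ∀ t > 0, (fun x => rvTail Z (x - t)) ~[atTop] (fun x => Real.exp (γ * t) * rvTail Z x)

/-- The tail of the two-fold convolution of the distribution of `Z` with itself. -/
def convSqTail {Ω : Type*} [MeasureSpace Ω] (Z : Ω → ℝ) (x : ℝ) : ℝ :=
  (((Measure.map Z ℙ).conv (Measure.map Z ℙ)) (Ioi x)).toReal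

/-- The distribution of `Z` belongs to the class `S(γ)`: it belongs to `L(γ)`, the
exponential moment `c = ∫ e^{γ y} dV(y)` is finite, and the tail of the two-fold
convolution satisfies `V̄*²(x) ~ 2 c V̄(x)` as `x → ∞`. -/
def MemSGamma {Ω : Type*} [MeasureSpace Ω] (Z : Ω → ℝ) (γ : ℝ) : Prop :=
  MemLGamma Z γ ∧
    Integrable (fun y => Real.exp (γ * y)) (Measure.map Z ℙ) ∧
    (fun x => convSqTail Z x) ~[atTop]
      (fun x => 2 * (∫ y, Real.exp (γ * y) ∂(Measure.map Z ℙ)) * rvTail Z x)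

open Classical in
/-- `γ / β_G`, where `β_G = sup {y : G(y) < 1}` is the right endpoint of the distribution
of `Z`, with the convention that `γ / β_G = 0` when `β_G = ∞`.
(Note that `G(y) < 1 ↔ P(Z > y) > 0`.) -/
def gammaOverBeta {Ω : Type*} [MeasureSpace Ω] (Z : Ω → ℝ) (γ : ℝ) : ℝ :=
  if BddAbove {y : ℝ | 0 < rvTail Z y} then γ / sSup {y : ℝ | 0 < rvTail Z y} else 0

/-- Assumption 2: `Ḡ(b x) = o(H̄(x))` as `x → ∞` for every constant `b > 0`, where `G` is
the distribution of `Y` and `H` is the distribution of the product `X Y`. -/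
def Assumption2 {Ω : Type*} [MeasureSpace Ω] (X Y : Ω → ℝ) : Prop :=
  ∀ b > 0, (fun x => rvTail Y (b * x)) =o[atTop] fun x => rvTail (fun ω => X ω * Y ω) x

/-- Assumption 1: `K x y` is the conditional probability `P(X > x | Y = y)`, namely for
`y` in the support of `Y` it is the limit of `P(X > x | Y ∈ (y - δ, y + δ])` as `δ → 0+`,
and for `y` outside the support it is the unconditional probability `P(X > x)` (and then
`h y = 1`); `h : [0,∞) → (0,∞)` is a measurable function such that
`P(X > x | Y = y) ~ h(y) P(X > x)` as `x → ∞`, uniformly for `y ≥ 0`. -/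
def Assumption1 {Ω : Type*} [MeasureSpace Ω] (X Y : Ω → ℝ) (h : ℝ → ℝ) (K : ℝ → ℝ → ℝ) :
    Prop :=
  Measurable h ∧ (∀ y, 0 ≤ y → 0 < h y) ∧
    (∀ y, y ∉ distSupport Y → h y = 1 ∧ ∀ x, K x y = rvTail X x) ∧
    (∀ y ∈ distSupport Y, ∀ x : ℝ,
      Tendsto
        (fun δ : ℝ => (ℙ {ω | x < X ω ∧ Y ω ∈ Ioc (y - δ) (y + δ)}).toReal /
          (ℙ {ω | Y ω ∈ Ioc (y - δ) (y + δ)}).toReal)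
        (nhdsWithin 0 (Ioi 0)) (nhds (K x y))) ∧
    ∀ ε > 0, ∀ᶠ x in atTop, ∀ y, 0 ≤ y → |K x y / (h y * rvTail X x) - 1| < ε

/-- `(X, Y)` follows a Farlie–Gumbel–Morgenstern (FGM) distribution with parameter
`θ ∈ [-1, 1]`: `P(X > x, Y > y) = F̄(x) Ḡ(y) (1 + θ F(x) G(y))` for all `x` in the
support of `X` and `y` in the support of `Y`. -/
def FGM {Ω : Type*} [MeasureSpace Ω] (X Y : Ω → ℝ) (θ : ℝ) : Prop :=
  θ ∈ Icc (-1 : ℝ) 1 ∧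
    ∀ x ∈ distSupport X, ∀ y ∈ distSupport Y,
      (ℙ {ω | x < X ω ∧ y < Y ω}).toReal =
        rvTail X x * rvTail Y y * (1 + θ * rvCdf X x * rvCdf Y y)

/-- `(X, Y)` follows a bivariate Sarmanov distribution with kernels `φ₁, φ₂` and
parameter `θ`: the joint law has density `1 + θ φ₁(x) φ₂(y)` with respect to the product
of the marginal laws, where `φ₁, φ₂` are measurable, `E φ₁(X) = E φ₂(Y) = 0` and
`1 + θ φ₁(x) φ₂(y) ≥ 0`. -/
def Sarmanov {Ω : Type*} [MeasureSpace Ω] (X Y : Ω → ℝ) (φ₁ φ₂ : ℝ → ℝ) (θ : ℝ) : Prop :=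
  Measurable φ₁ ∧ Measurable φ₂ ∧
    Integrable (fun ω => φ₁ (X ω)) ℙ ∧ Integrable (fun ω => φ₂ (Y ω)) ℙ ∧
    (∫ ω, φ₁ (X ω)) = 0 ∧ (∫ ω, φ₂ (Y ω)) = 0 ∧
    (∀ x y : ℝ, 0 ≤ y → 0 ≤ 1 + θ * φ₁ x * φ₂ y) ∧
    Measure.map (fun ω => (X ω, Y ω)) ℙ =
      ((Measure.map X ℙ).prod (Measure.map Y ℙ)).withDensity
        (fun p => ENNReal.ofReal (1 + θ * φ₁ p.1 * φ₂ p.2))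

/-- The condition `ψ(y) = lim_{δ → 0+} (∫_{y-δ}^{y+δ} φ₂(v) G(dv)) / (G(y+δ) - G(y-δ))`
for all `y` in the support of `Y`. -/
def SarmanovPsi {Ω : Type*} [MeasureSpace Ω] (Y : Ω → ℝ) (φ₂ ψ : ℝ → ℝ) : Prop :=
  ∀ y ∈ distSupport Y,
    Tendsto
      (fun δ : ℝ => (∫ v in Ioc (y - δ) (y + δ), φ₂ v ∂(Measure.map Y ℙ)) /
        (rvCdf Y (y + δ) - rvCdf Y (y - δ)))
      (nhdsWithin 0 (Ioi 0)) (nhds (ψ y))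





def LgP (μ : Measure ℝ) (γ : ℝ) : Prop :=
  (∀ x, μ (Ioi x) ≠ 0) ∧
  (∀ t > 0, ∀ c > Real.exp (γ * t), ∀ᶠ x in atTop,
    μ (Ioi (x - t)) ≤ ENNReal.ofReal c * μ (Ioi x)) ∧
  (∀ t > 0, ∀ c < Real.exp (γ * t), ∀ᶠ x in atTop,
    ENNReal.ofReal c * μ (Ioi x) ≤ μ (Ioi (x - t)))

def JSet (A x : ℝ) : Set (ℝ × ℝ) := {p | x < p.1 + p.2 ∧ A < p.1 ∧ A < p.2}

lemma measurableSet_JSet (A x : ℝ) : MeasurableSet (JSet A x) := by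
  have h : JSet A x = {p : ℝ × ℝ | x < p.1 + p.2} ∩ ({p : ℝ × ℝ | A < p.1} ∩ {p : ℝ × ℝ | A < p.2}) := by
    ext p; simp [JSet]
  rw [h]
  exact (measurableSet_lt measurable_const (by fun_prop)).inter
    ((measurableSet_lt measurable_const (by fun_prop)).inter
      (measurableSet_lt measurable_const (by fun_prop)))

def JcP (μ : Measure ℝ) : Prop :=
  ∀ ε : ℝ, 0 < ε → ∃ A > 0, ∀ᶠ x in atTop,
    (μ.prod μ) (JSet A x) ≤ ENNReal.ofReal ε * μ (Ioi x)

lemma JSet_section (A x y : ℝ) : Prod.mk y ⁻¹' (JSet A x) =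
    if A < y then Ioi (max (x - y) A) else ∅ := by
  ext z
  simp only [JSet, mem_preimage, mem_ofPred_eq]
  split_ifs with h
  · simp only [mem_Ioi, max_lt_iff]
    constructor
    · rintro ⟨a, b, c⟩; exact ⟨by linarith, c⟩
    · rintro ⟨a, b⟩; exact ⟨by linarith, h, b⟩
  · simp [h]

lemma JSet_anti {A B x : ℝ} (hAB : A ≤ B) : JSet B x ⊆ JSet A x := by
  rintro p ⟨a, b, c⟩
  exact ⟨a, by linarith, by linarith⟩

lemma JSet_mixed_le (U V W : Measure ℝ) [SFinite U] [SFinite V] [SFinite W]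
    (A x : ℝ) (C : ENNReal) (hVW : ∀ z ≥ A, V (Ioi z) ≤ C * W (Ioi z)) :
    (U.prod V) (JSet A x) ≤ C * (U.prod W) (JSet A x) := by
  rw [Measure.prod_apply (measurableSet_JSet A x), Measure.prod_apply (measurableSet_JSet A x),
    ← lintegral_const_mul _ (measurable_measure_prodMk_left (measurableSet_JSet A x))]
  apply lintegral_mono
  intro y
  simp only [JSet_section]
  split_ifs with h
  · exact hVW _ (le_max_right _ _)
  · simp

lemma JSet_symm (U V : Measure ℝ) [SFinite U] [SFinite V] (A x : ℝ) :
    (U.prod V) (JSet A x) = (V.prod U) (JSet A x) := by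
  rw [← Measure.prod_swap, Measure.map_apply measurable_swap (measurableSet_JSet A x)]
  congr 1
  ext p
  simp only [JSet, mem_preimage, mem_ofPred_eq, Prod.fst_swap, Prod.snd_swap]
  rw [add_comm]; tauto

lemma JSet_transfer (V W : Measure ℝ) [SFinite V] [SFinite W]
    (A x : ℝ) (C : ENNReal) (hVW : ∀ z ≥ A, V (Ioi z) ≤ C * W (Ioi z)) :
    (V.prod V) (JSet A x) ≤ C * (C * (W.prod W) (JSet A x)) := by
  refine (JSet_mixed_le V V W A x C hVW).trans ?_
  rw [JSet_symm V W]
  gcongr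
  exact JSet_mixed_le W V W A x C hVW

lemma JcP_transfer (V W : Measure ℝ) [SFinite V] [SFinite W] (C D : ℝ)
    (hC : 0 < C) (hD : 0 < D)
    (h1 : ∀ᶠ x in atTop, V (Ioi x) ≤ ENNReal.ofReal C * W (Ioi x))
    (h2 : ∀ᶠ x in atTop, W (Ioi x) ≤ ENNReal.ofReal D * V (Ioi x))
    (hW : JcP W) : JcP V := by
  intro ε hε
  obtain ⟨A, hA, hJ⟩ := hW (ε / (C * C * D)) (by positivity)
  obtain ⟨x0, hx0⟩ := eventually_atTop.1 h1
  refine ⟨max A x0, lt_max_of_lt_left hA, ?_⟩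
  filter_upwards [hJ, h2] with x hx hx2
  calc (V.prod V) (JSet (max A x0) x)
      ≤ ENNReal.ofReal C * (ENNReal.ofReal C * (W.prod W) (JSet (max A x0) x)) :=
        JSet_transfer V W _ x _ (fun z hz => hx0 z (le_trans (le_max_right _ _) hz))
    _ ≤ ENNReal.ofReal C * (ENNReal.ofReal C * (ENNReal.ofReal (ε / (C * C * D)) *
          (ENNReal.ofReal D * V (Ioi x)))) := by
        gcongr
        refine (measure_mono (JSet_anti (le_max_left _ _))).trans (hx.trans ?_)
        gcongr
    _ = ENNReal.ofReal ε * V (Ioi x) := by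
        rw [← mul_assoc, ← mul_assoc, ← mul_assoc, ← ENNReal.ofReal_mul hC.le,
          ← ENNReal.ofReal_mul (by positivity), ← ENNReal.ofReal_mul (by positivity)]
        congr 2
        field_simp

/-- law of the product -/
def prodLaw (F G : Measure ℝ) : Measure ℝ := (F.prod G).map (fun p => p.1 * p.2)

lemma section_mul_lt {x y : ℝ} (hx : 0 ≤ x) (hy : 0 ≤ y) :
    {u : ℝ | x < u * y} = if 0 < y then Ioi (x / y) else ∅ := by
  ext u
  split_ifs with h
  · simp [div_lt_iff₀ h]
  · have : y = 0 := le_antisymm (not_lt.1 h) hy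
    simp [this, hx]

lemma prodLaw_Ioi (F G : Measure ℝ) [SFinite F] [SFinite G] (hG : ∀ᵐ y ∂G, 0 ≤ y) {x : ℝ}
    (hx : 0 ≤ x) :
    prodLaw F G (Ioi x) = ∫⁻ y in Ioi 0, F (Ioi (x / y)) ∂G := by
  rw [prodLaw, Measure.map_apply (by fun_prop) measurableSet_Ioi,
    Measure.prod_apply_symm (measurableSet_Ioi.preimage (by fun_prop)),
    ← lintegral_indicator measurableSet_Ioi]
  apply lintegral_congr_ae
  filter_upwards [hG] with y hy
  have := section_mul_lt hx hy
  simp only [preimage, mem_Ioi, mem_ofPred_eq, this, indicator]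
  split_ifs <;> simp

lemma measurable_tail_div (F : Measure ℝ) (x s : ℝ) :
    Measurable (fun y : ℝ => F (Ioi (x / y - s))) := by
  have : Antitone (fun z : ℝ => F (Ioi z)) := fun a b hab => measure_mono (Ioi_subset_Ioi hab)
  exact this.measurable.comp (by fun_prop)

/-- lower bound for the product tail -/
lemma prodLaw_ge (F G : Measure ℝ) [SFinite F] [SFinite G] {x M : ℝ}
    (hx : 0 ≤ x) (hM : 0 < M) :
    F (Ioi (x / M)) * G (Ioi M) ≤ prodLaw F G (Ioi x) := by
  rw [prodLaw, Measure.map_apply (by fun_prop) measurableSet_Ioi, ← Measure.prod_prod]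
  apply measure_mono
  rintro ⟨u, y⟩ ⟨hu, hy⟩
  simp only [mem_Ioi, mem_preimage] at *
  have h1 : x < u * M := by rwa [div_lt_iff₀ hM] at hu
  have : 0 < u := lt_of_le_of_lt (by positivity) hu
  nlinarith




def secSet (A x y1 y2 : ℝ) : Set (ℝ × ℝ) :=
  {p | x < p.1 * y1 + p.2 * y2 ∧ A < p.1 * y1 ∧ A < p.2 * y2}

def PhiB (F : Measure ℝ) (A A' B C η δ x y1 y2 : ℝ) : ENNReal :=
  (Ioi (δ * x)).indicator 1 y2 +
  (ENNReal.ofReal η * (Ioc 0 (δ * x)).indicator (fun y => F (Ioi (x / y))) y2 +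
  ((Ioi (A / B)).indicator 1 y1 *
    (ENNReal.ofReal C * (Ioc 0 (δ * x)).indicator (fun y => F (Ioi (x / y))) y2) +
  ((Ioi A').indicator 1 y1 *
    (ENNReal.ofReal C * (Ioc 0 (δ * x)).indicator (fun y => F (Ioi (x / y))) y2) +
  F (Ioi (x / (2 * A'))) * (Ioi (A / B)).indicator 1 y2)))

lemma sec_subset {A A' B x y1 y2 : ℝ} (hA : 0 < A) (hA' : 0 < A') (hB : 0 < B)
    (hy1 : 0 ≤ y1) (h12 : y1 ≤ y2) (hy2 : 0 < y2) (hBx : 2 * B * y2 ≤ x) :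
    secSet A x y1 y2 ⊆ JSet B (x / y2) ∪ ({p | A / B < y1 ∧ x / y2 - B < p.2} ∪
      ({p | A' < y1 ∧ x / y2 - B < p.1} ∪ {p | A / B < y2 ∧ x / (2 * A') < p.1})) := by
  rintro ⟨u, v⟩ ⟨h1, h2, h3⟩
  simp only at h1 h2 h3
  have hu : 0 < u := by
    by_contra hh; push Not at hh
    nlinarith [mul_nonneg (neg_nonneg.2 hh) hy1]
  have hv : 0 < v := by
    by_contra hh; push Not at hh
    nlinarith [mul_nonneg (neg_nonneg.2 hh) hy2.le]
  have huy : u * y1 ≤ u * y2 := by nlinarith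
  by_cases hu1 : u ≤ B
  · right; left
    refine ⟨?_, ?_⟩
    · rw [div_lt_iff₀ hB]; nlinarith
    · simp only
      rw [sub_lt_iff_lt_add, div_lt_iff₀ hy2]; nlinarith
  push Not at hu1
  by_cases hv1 : v ≤ B
  · right; right
    by_cases hy : A' < y1
    · left
      refine ⟨hy, ?_⟩
      simp only
      rw [sub_lt_iff_lt_add, div_lt_iff₀ hy2]; nlinarith
    · right
      push Not at hy
      refine ⟨?_, ?_⟩
      · rw [div_lt_iff₀ hB]; nlinarith
      · simp only
        rw [div_lt_iff₀ (by positivity)]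
        nlinarith
  push Not at hv1
  left
  refine ⟨?_, hu1, hv1⟩
  simp only
  rw [div_lt_iff₀ hy2]; nlinarith

lemma sec_le (F : Measure ℝ) [IsProbabilityMeasure F] {A A' B C η δ x y1 y2 : ℝ}
    (hA : 0 < A) (hA' : 0 < A') (hB : 0 < B) (hδ : 0 < δ) (hδB : 2 * B * δ ≤ 1) (hx : 0 < x)
    (hJ : ∀ z ≥ 1 / δ, (F.prod F) (JSet B z) ≤ ENNReal.ofReal η * F (Ioi z))
    (hL : ∀ z ≥ 1 / δ, F (Ioi (z - B)) ≤ ENNReal.ofReal C * F (Ioi z))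
    (hy1 : 0 ≤ y1) (h12 : y1 ≤ y2) :
    (F.prod F) (secSet A x y1 y2) ≤ PhiB F A A' B C η δ x y1 y2 := by
  by_cases hbig : δ * x < y2
  · calc (F.prod F) (secSet A x y1 y2) ≤ 1 := prob_le_one
      _ = (Ioi (δ * x)).indicator 1 y2 := by simp [indicator, hbig]
      _ ≤ _ := le_self_add
  push Not at hbig
  by_cases hy2 : y2 ≤ 0
  · have : y2 = 0 := le_antisymm hy2 (hy1.trans h12)
    have : secSet A x y1 y2 = ∅ := by
      ext p; simp [secSet, this]; intros; linarith
    simp [this]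
  push Not at hy2
  have hz : x / y2 ≥ 1 / δ := by
    rw [ge_iff_le, div_le_div_iff₀ hδ hy2]; linarith
  have hBx : 2 * B * y2 ≤ x := by nlinarith [mul_le_mul_of_nonneg_left hbig hB.le]
  refine (measure_mono (sec_subset hA hA' hB hy1 h12 hy2 hBx)).trans ?_
  refine (measure_union_le _ _).trans ?_
  refine le_trans ?_ le_add_self
  have hind : (Ioc 0 (δ * x)).indicator (fun y => F (Ioi (x / y))) y2 = F (Ioi (x / y2)) := by
    simp [indicator, hy2, hbig]
  rw [hind]
  refine add_le_add (hJ _ hz) ?_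
  refine (measure_union_le _ _).trans ?_
  refine add_le_add ?_ ?_
  · by_cases hh : A / B < y1
    · have : {p : ℝ × ℝ | A / B < y1 ∧ x / y2 - B < p.2} = univ ×ˢ Ioi (x / y2 - B) := by
        ext p; simp [hh]
      rw [this, Measure.prod_prod]
      simpa [indicator, hh] using hL _ hz
    · simp [hh]
  refine (measure_union_le _ _).trans ?_
  refine add_le_add ?_ ?_
  · by_cases hh : A' < y1
    · have : {p : ℝ × ℝ | A' < y1 ∧ x / y2 - B < p.1} = Ioi (x / y2 - B) ×ˢ univ := by
        ext p; simp [hh]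
      rw [this, Measure.prod_prod]
      simpa [indicator, hh] using hL _ hz
    · simp [hh]
  · by_cases hh : A / B < y2
    · have : {p : ℝ × ℝ | A / B < y2 ∧ x / (2 * A') < p.1} = Ioi (x / (2 * A')) ×ˢ univ := by
        ext p; simp [hh]
      rw [this, Measure.prod_prod]
      simp [indicator, hh]
    · simp [hh]

lemma sec_symm (F : Measure ℝ) [SFinite F] (A x y1 y2 : ℝ) :
    (F.prod F) (secSet A x y1 y2) = (F.prod F) (secSet A x y2 y1) := by
  have hm : MeasurableSet (secSet A x y1 y2) := by
    have : secSet A x y1 y2 = (fun p : ℝ × ℝ => (p.1 * y1, p.2 * y2)) ⁻¹' (JSet A x) := by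
      ext p; simp [secSet, JSet]
    rw [this]
    exact (measurableSet_JSet A x).preimage (by fun_prop)
  conv_lhs => rw [← Measure.prod_swap, Measure.map_apply measurable_swap hm]
  congr 1
  ext p
  simp only [secSet, mem_preimage, mem_ofPred_eq, Prod.fst_swap, Prod.snd_swap]
  rw [add_comm]; tauto

lemma lintegral_prodLaw (F G : Measure ℝ) [SFinite F] [SFinite G] {g : ℝ → ENNReal}
    (hg : Measurable g) :
    ∫⁻ z, g z ∂(prodLaw F G) = ∫⁻ y, ∫⁻ u, g (u * y) ∂F ∂G := by
  rw [prodLaw, lintegral_map hg (by fun_prop), lintegral_prod_symm' _ (by fun_prop)]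

instance (F G : Measure ℝ) [IsFiniteMeasure F] [IsFiniteMeasure G] :
    IsFiniteMeasure (prodLaw F G) := by unfold prodLaw; infer_instance

lemma J_prodLaw (F G : Measure ℝ) [IsFiniteMeasure F] [IsFiniteMeasure G] (A x : ℝ) :
    ((prodLaw F G).prod (prodLaw F G)) (JSet A x) =
      ∫⁻ y1, ∫⁻ y2, (F.prod F) (secSet A x y1 y2) ∂G ∂G := by
  have hJ := measurableSet_JSet A x
  set f : ℝ × ℝ → ENNReal := (JSet A x).indicator 1 with hf
  have hfm : Measurable f := measurable_one.indicator hJ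
  rw [← lintegral_indicator_one hJ, ← hf, lintegral_prod _ hfm.aemeasurable,
    lintegral_prodLaw _ _ hfm.lintegral_prod_right']
  apply lintegral_congr
  intro y1
  have : ∀ u, ∫⁻ y, f (u * y1, y) ∂(prodLaw F G) = ∫⁻ y2, ∫⁻ v, f (u * y1, v * y2) ∂F ∂G := by
    intro u
    rw [lintegral_prodLaw _ _ (by fun_prop)]
  simp_rw [this]
  rw [lintegral_lintegral_swap]
  · apply lintegral_congr
    intro y2
    have hm : MeasurableSet ((fun p : ℝ × ℝ => (p.1 * y1, p.2 * y2)) ⁻¹' (JSet A x)) :=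
      hJ.preimage (by fun_prop)
    have he : secSet A x y1 y2 = (fun p : ℝ × ℝ => (p.1 * y1, p.2 * y2)) ⁻¹' (JSet A x) := by
      ext p; simp [secSet, JSet]
    rw [he, ← lintegral_indicator_one hm, lintegral_prod _ (by fun_prop)]
    rfl
  · apply Measurable.aemeasurable
    have : Measurable (fun p : (ℝ × ℝ) × ℝ => f (p.1.1 * y1, p.2 * p.1.2)) := by fun_prop
    exact this.lintegral_prod_right'

lemma J_prodLaw_le (F G : Measure ℝ) [IsProbabilityMeasure F] [IsFiniteMeasure G]
    (hG : ∀ᵐ y ∂G, 0 ≤ y) {A A' B C η δ x : ℝ}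
    (hA : 0 < A) (hA' : 0 < A') (hB : 0 < B) (hδ : 0 < δ) (hδB : 2 * B * δ ≤ 1) (hx : 0 < x)
    (hJ : ∀ z ≥ 1 / δ, (F.prod F) (JSet B z) ≤ ENNReal.ofReal η * F (Ioi z))
    (hL : ∀ z ≥ 1 / δ, F (Ioi (z - B)) ≤ ENNReal.ofReal C * F (Ioi z)) :
    ((prodLaw F G).prod (prodLaw F G)) (JSet A x) ≤
      2 * (G univ * G (Ioi (δ * x)) + (G univ * (ENNReal.ofReal η * prodLaw F G (Ioi x)) +
        (G (Ioi (A / B)) * (ENNReal.ofReal C * prodLaw F G (Ioi x)) +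
        (G (Ioi A') * (ENNReal.ofReal C * prodLaw F G (Ioi x)) +
         G univ * (F (Ioi (x / (2 * A'))) * G (Ioi (A / B))))))) := by
  set ψ : ℝ → ENNReal := (Ioc 0 (δ * x)).indicator (fun y => F (Ioi (x / y))) with hψ
  have hψm : Measurable ψ := by
    have := measurable_tail_div F x 0
    simp only [sub_zero] at this
    exact this.indicator measurableSet_Ioc
  have hψle : ∫⁻ y, ψ y ∂G ≤ prodLaw F G (Ioi x) := by
    rw [prodLaw_Ioi F G hG hx.le, hψ, lintegral_indicator measurableSet_Ioc]
    exact lintegral_mono_set Ioc_subset_Ioi_self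
  have hi1 : ∀ a : ℝ, Measurable ((Ioi a).indicator (1 : ℝ → ENNReal)) :=
    fun a => measurable_one.indicator measurableSet_Ioi
  have hΦm : Measurable (fun p : ℝ × ℝ => PhiB F A A' B C η δ x p.1 p.2) := by
    unfold PhiB
    have h1 := hi1 (δ * x); have h2 := hi1 (A / B); have h3 := hi1 A'
    simp only [← hψ]
    fun_prop
  have hΦ : ∫⁻ p, PhiB F A A' B C η δ x p.1 p.2 ∂(G.prod G) ≤
      (G univ * G (Ioi (δ * x)) + (G univ * (ENNReal.ofReal η * prodLaw F G (Ioi x)) +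
        (G (Ioi (A / B)) * (ENNReal.ofReal C * prodLaw F G (Ioi x)) +
        (G (Ioi A') * (ENNReal.ofReal C * prodLaw F G (Ioi x)) +
         G univ * (F (Ioi (x / (2 * A'))) * G (Ioi (A / B))))))) := by
    unfold PhiB
    have h1 := hi1 (δ * x); have h2 := hi1 (A / B); have h3 := hi1 A'
    simp only [← hψ]
    have key : ∀ (a b : ℝ → ENNReal), Measurable a → Measurable b →
        ∫⁻ p, a p.1 * b p.2 ∂(G.prod G) = (∫⁻ y, a y ∂G) * ∫⁻ y, b y ∂G :=
      fun a b ha hb => lintegral_prod_mul ha.aemeasurable hb.aemeasurable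
    have key1 : ∀ (b : ℝ → ENNReal), Measurable b →
        ∫⁻ p, b p.2 ∂(G.prod G) = G univ * ∫⁻ y, b y ∂G := by
      intro b hb
      have := key 1 b measurable_one hb
      simpa using this
    rw [lintegral_add_left (by fun_prop), lintegral_add_left (by fun_prop),
      lintegral_add_left (by fun_prop), lintegral_add_left (by fun_prop)]
    rw [key1 _ h1, key1 (fun y => ENNReal.ofReal η * ψ y) (by fun_prop),
      key _ (fun y => ENNReal.ofReal C * ψ y) h2 (by fun_prop),
      key _ (fun y => ENNReal.ofReal C * ψ y) h3 (by fun_prop),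
      key1 (fun y => F (Ioi (x / (2 * A'))) * (Ioi (A / B)).indicator 1 y) (by fun_prop),
      lintegral_const_mul _ hψm, lintegral_const_mul _ hψm, lintegral_const_mul _ h2,
      lintegral_indicator_one measurableSet_Ioi, lintegral_indicator_one measurableSet_Ioi,
      lintegral_indicator_one measurableSet_Ioi]
    gcongr
  rw [J_prodLaw]
  calc ∫⁻ y1, ∫⁻ y2, (F.prod F) (secSet A x y1 y2) ∂G ∂G
      ≤ ∫⁻ y1, ∫⁻ y2, (PhiB F A A' B C η δ x y1 y2 + PhiB F A A' B C η δ x y2 y1) ∂G ∂G := by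
        apply lintegral_mono_ae
        filter_upwards [hG] with y1 hy1
        apply lintegral_mono_ae
        filter_upwards [hG] with y2 hy2
        rcases le_total y1 y2 with h | h
        · exact (sec_le F hA hA' hB hδ hδB hx hJ hL hy1 h).trans le_self_add
        · rw [sec_symm]
          exact (sec_le F hA hA' hB hδ hδB hx hJ hL hy2 h).trans le_add_self
    _ = ∫⁻ p, (PhiB F A A' B C η δ x p.1 p.2 + PhiB F A A' B C η δ x p.2 p.1) ∂(G.prod G) := by
        rw [lintegral_prod]
        exact (hΦm.add (hΦm.comp measurable_swap)).aemeasurable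
    _ = ∫⁻ p, PhiB F A A' B C η δ x p.1 p.2 ∂(G.prod G) +
        ∫⁻ p, PhiB F A A' B C η δ x p.1 p.2 ∂(G.prod G) := by
        rw [lintegral_add_left hΦm]
        congr 1
        exact lintegral_prod_swap (fun p : ℝ × ℝ => PhiB F A A' B C η δ x p.1 p.2)
    _ ≤ _ := by
        rw [← two_mul]
        gcongr




lemma tail_tendsto_zero (G : Measure ℝ) [IsFiniteMeasure G] :
    Tendsto (fun a => G (Ioi a)) atTop (nhds 0) := by
  have h := tendsto_measure_iInter_atTop (μ := G) (s := fun a : ℝ => Ioi a)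
    (fun a => measurableSet_Ioi.nullMeasurableSet)
    (fun a b hab => Ioi_subset_Ioi hab) ⟨0, measure_ne_top _ _⟩
  have : (⋂ a : ℝ, Ioi a) = ∅ := by
    ext z; simp only [mem_iInter, mem_Ioi, mem_empty_iff_false, iff_false, not_forall]
    exact ⟨z, lt_irrefl _⟩
  simpa [this, Function.comp_def] using h

lemma tail_small (G : Measure ℝ) [IsFiniteMeasure G] {e : ENNReal} (he : e ≠ 0) :
    ∀ᶠ a in atTop, G (Ioi a) ≤ e :=
  ((tail_tendsto_zero G).eventually_lt_const (pos_iff_ne_zero.2 he)).mono fun _ h => h.le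

/-- the `o` assumption -/
def SmallG (G H : Measure ℝ) : Prop :=
  ∀ b > 0, ∀ ε : ℝ, 0 < ε → ∀ᶠ x in atTop, G (Ioi (b * x)) ≤ ENNReal.ofReal ε * H (Ioi x)

lemma JcP_prodLaw (F G : Measure ℝ) [IsProbabilityMeasure F] [IsFiniteMeasure G]
    (hG : ∀ᵐ y ∂G, 0 ≤ y) (γ : ℝ) (hL : LgP F γ) (hJ : JcP F)
    (hS : SmallG G (prodLaw F G)) : JcP (prodLaw F G) := by
  intro ε hε
  set g : ℝ := (G univ).toReal with hg
  have hg0 : 0 ≤ g := ENNReal.toReal_nonneg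
  have hgof : G univ = ENNReal.ofReal g := (ENNReal.ofReal_toReal (measure_ne_top _ _)).symm
  set η : ℝ := ε / (10 * (g + 1)) with hη
  have hη0 : 0 < η := by positivity
  obtain ⟨B, hB, hJB⟩ := hJ η hη0
  set C : ℝ := Real.exp (γ * B) + 1 with hC
  have hC0 : 0 < C := by positivity
  have hLB := hL.2.1 B hB C (by rw [hC]; linarith)
  obtain ⟨z0, hz0⟩ := eventually_atTop.1 (hJB.and hLB)
  have hηC : ENNReal.ofReal (η / C) ≠ 0 := by simpa using div_pos hη0 hC0
  obtain ⟨A', hA'1, hA'0⟩ := ((tail_small G hηC).and (eventually_gt_atTop 0)).exists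
  have hex : ∃ a > 0, G (Ioi a) ≤ ENNReal.ofReal (η / C) ∧
      G (Ioi a) ≤ ENNReal.ofReal η * G (Ioi (2 * A')) := by
    by_cases h0 : G (Ioi (2 * A')) = 0
    · refine ⟨2 * A', by positivity, ?_, ?_⟩ <;> simp [h0]
    · have : ENNReal.ofReal η * G (Ioi (2 * A')) ≠ 0 := by simp [h0, hη0]
      obtain ⟨a, h1, h2, h3⟩ :=
        ((tail_small G hηC).and ((tail_small G this).and (eventually_gt_atTop 0))).exists
      exact ⟨a, h3, h1, h2⟩
  obtain ⟨a, ha0, ha1, ha2⟩ := hex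
  have hAB : a * B / B = a := by field_simp
  refine ⟨a * B, by positivity, ?_⟩
  set m : ℝ := max (max z0 1) (2 * B) with hm
  have hm1 : 1 ≤ m := le_trans (le_max_right _ _) (le_max_left _ _)
  have hm2 : z0 ≤ m := le_trans (le_max_left _ _) (le_max_left _ _)
  have hm3 : 2 * B ≤ m := le_max_right _ _
  have hm0 : 0 < m := by linarith
  set δ : ℝ := 1 / m with hδ
  have hδ0 : 0 < δ := by positivity
  have h1δ : 1 / δ = m := by rw [hδ]; simp
  filter_upwards [hS δ hδ0 η hη0, eventually_gt_atTop 0] with x hx hx0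
  have := J_prodLaw_le F G hG (A := a * B) (A' := A') (B := B) (C := C) (η := η) (δ := δ) (x := x)
    (by positivity) hA'0 hB hδ0
    (by rw [hδ, mul_one_div, div_le_one hm0]; exact hm3) hx0
    (fun z hz => (hz0 z (by rw [h1δ] at hz; linarith)).1)
    (fun z hz => (hz0 z (by rw [h1δ] at hz; linarith)).2)
  refine this.trans ?_
  rw [hAB]
  set T := prodLaw F G (Ioi x) with hT
  have hlow : F (Ioi (x / (2 * A'))) * G (Ioi (2 * A')) ≤ T := prodLaw_ge F G hx0.le (by positivity)
  have e5 : F (Ioi (x / (2 * A'))) * G (Ioi a) ≤ ENNReal.ofReal η * T := by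
    calc F (Ioi (x / (2 * A'))) * G (Ioi a)
        ≤ F (Ioi (x / (2 * A'))) * (ENNReal.ofReal η * G (Ioi (2 * A'))) := by gcongr
      _ = ENNReal.ofReal η * (F (Ioi (x / (2 * A'))) * G (Ioi (2 * A'))) := by ring
      _ ≤ _ := by gcongr
  have eC : ENNReal.ofReal (η / C) * (ENNReal.ofReal C * T) = ENNReal.ofReal η * T := by
    rw [← mul_assoc, ← ENNReal.ofReal_mul (by positivity)]
    congr 2; field_simp
  calc _ ≤ 2 * (ENNReal.ofReal g * (ENNReal.ofReal η * T) + (ENNReal.ofReal g * (ENNReal.ofReal η * T) +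
        (ENNReal.ofReal (η / C) * (ENNReal.ofReal C * T) +
        (ENNReal.ofReal (η / C) * (ENNReal.ofReal C * T) +
         ENNReal.ofReal g * (ENNReal.ofReal η * T))))) := by
        rw [hgof]
        gcongr
    _ = ENNReal.ofReal (2 * (3 * g + 2) * η) * T := by
        rw [eC, ENNReal.ofReal_mul (by positivity), ENNReal.ofReal_mul (by positivity),
          ENNReal.ofReal_add (by positivity) (by positivity), ENNReal.ofReal_mul (by positivity)]
        simp only [ENNReal.ofReal_ofNat]
        ring
    _ ≤ ENNReal.ofReal ε * T := by
        gcongr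
        rw [hη, mul_div_assoc', div_le_iff₀ (by positivity)]
        nlinarith

lemma exists_gt_tail {G : Measure ℝ} {M : ℝ} (h : G (Ioi M) ≠ 0) :
    ∃ M' > M, G (Ioi M') ≠ 0 := by
  by_contra hcon
  push Not at hcon
  apply h
  have : Ioi M = ⋃ n : ℕ, Ioi (M + 1 / ((n : ℝ) + 1)) := by
    ext z
    simp only [mem_Ioi, mem_iUnion]
    constructor
    · intro hz
      obtain ⟨n, hn⟩ := exists_nat_one_div_lt (sub_pos.2 hz)
      exact ⟨n, by linarith⟩
    · rintro ⟨n, hn⟩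
      have : (0 : ℝ) < 1 / ((n : ℝ) + 1) := by positivity
      linarith
  rw [this, measure_iUnion_null_iff]
  intro n
  apply hcon
  have : (0 : ℝ) < 1 / ((n : ℝ) + 1) := by positivity
  linarith

/-- for `γ = 0` the mass near zero is negligible -/
lemma exists_small_mass {G : Measure ℝ} [IsFiniteMeasure G] (h : G (Ioi 0) ≠ 0) {ε : ℝ}
    (hε : 0 < ε) :
    ∃ M > 0, G (Ioc 0 M) ≤ ENNReal.ofReal ε * G (Ioi (2 * M)) := by
  obtain ⟨M1, hM1, hG1⟩ := exists_gt_tail h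
  have hlim : Tendsto (fun n : ℕ => G (Ioc 0 (1 / ((n : ℝ) + 1)))) atTop (nhds 0) := by
    have := tendsto_measure_iInter_atTop (μ := G) (s := fun n : ℕ => Ioc (0 : ℝ) (1 / ((n : ℝ) + 1)))
      (fun a => measurableSet_Ioc.nullMeasurableSet)
      (fun a b hab => Ioc_subset_Ioc_right (Nat.one_div_le_one_div hab)) ⟨0, measure_ne_top _ _⟩
    have he : (⋂ n : ℕ, Ioc (0 : ℝ) (1 / ((n : ℝ) + 1))) = ∅ := by
      ext z
      simp only [mem_iInter, mem_Ioc, mem_empty_iff_false, iff_false, not_forall]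
      by_cases hz : 0 < z
      · obtain ⟨n, hn⟩ := exists_nat_one_div_lt hz
        exact ⟨n, fun h => by linarith [h.2]⟩
      · exact ⟨0, fun h => hz h.1⟩
    simpa only [he, measure_empty, Function.comp_def] using this
  have hne : 0 < ENNReal.ofReal ε * G (Ioi M1) := by
    rw [pos_iff_ne_zero]; simp [hG1, hε]
  have h2 := hlim.eventually_lt_const hne
  have h3 : ∀ᶠ n : ℕ in atTop, (1 : ℝ) / ((n : ℝ) + 1) < M1 / 2 :=
    tendsto_one_div_add_atTop_nhds_zero_nat.eventually_lt_const (by linarith)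
  obtain ⟨n, hn2, hn3⟩ := (h2.and h3).exists
  refine ⟨1 / ((n : ℝ) + 1), by positivity, hn2.le.trans ?_⟩
  exact mul_le_mul' le_rfl (measure_mono (Ioi_subset_Ioi (by linarith)))

/-- For `γ > 0`, tails decay: `F(z + u) ≤ ε F(z)` for suitable `u`. -/
lemma LgP.decay {F : Measure ℝ} {γ : ℝ} (hL : LgP F γ) (hγ : 0 < γ) {ε : ℝ} (hε : 0 < ε) :
    ∃ u > 0, ∀ᶠ z in atTop, F (Ioi (z + u)) ≤ ENNReal.ofReal ε * F (Ioi z) := by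
  obtain ⟨u, hu1, hu2⟩ : ∃ u > 0, 1 / ε < Real.exp (γ * u) := by
    have : Tendsto (fun u => Real.exp (γ * u)) atTop atTop :=
      Real.tendsto_exp_atTop.comp (tendsto_id.const_mul_atTop hγ)
    obtain ⟨u, h1, h2⟩ := ((this.eventually_gt_atTop (1 / ε)).and (eventually_gt_atTop 0)).exists
    exact ⟨u, h2, h1⟩
  refine ⟨u, hu1, ?_⟩
  have h := (tendsto_atTop_add_const_right atTop u tendsto_id).eventually (hL.2.2 u hu1 _ hu2)
  filter_upwards [h] with z hz
  simp only [id, add_sub_cancel_right] at hz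
  calc F (Ioi (z + u)) = ENNReal.ofReal ε * (ENNReal.ofReal (1 / ε) * F (Ioi (z + u))) := by
        rw [← mul_assoc, ← ENNReal.ofReal_mul hε.le, mul_one_div_cancel hε.ne']; simp
    _ ≤ _ := by gcongr

lemma prodLaw_upper_aux (F G : Measure ℝ) [IsProbabilityMeasure F] [IsFiniteMeasure G]
    (hG : ∀ᵐ y ∂G, 0 ≤ y) {M δ x t c : ℝ} (hM : 0 < M) (hx : 0 < x) (ht : 0 < t) (hδ : 0 < δ)
    (hxt : t ≤ x)
    (hL : ∀ z ≥ 1 / δ, F (Ioi (z - t / M)) ≤ ENNReal.ofReal c * F (Ioi z)) :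
    prodLaw F G (Ioi (x - t)) ≤ G (Ioc 0 M) * F (Ioi ((x - t) / M)) +
      ENNReal.ofReal c * prodLaw F G (Ioi x) + G (Ioi (δ * x)) := by
  have hm0 : Measurable (fun y : ℝ => F (Ioi (x / y))) := by
    simpa only [sub_zero] using measurable_tail_div F x 0
  rw [prodLaw_Ioi F G hG (by linarith), prodLaw_Ioi F G hG hx.le,
    ← lintegral_indicator measurableSet_Ioi, ← lintegral_indicator measurableSet_Ioi]
  have h1 : G (Ioc 0 M) * F (Ioi ((x - t) / M)) =
      ∫⁻ y, (Ioc 0 M).indicator (fun _ => F (Ioi ((x - t) / M))) y ∂G := by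
    rw [lintegral_indicator measurableSet_Ioc]; simp [mul_comm]
  have h2 : G (Ioi (δ * x)) = ∫⁻ y, (Ioi (δ * x)).indicator 1 y ∂G := by
    rw [lintegral_indicator_one measurableSet_Ioi]
  have hmi := hm0.indicator (measurableSet_Ioi (a := (0 : ℝ)))
  rw [h1, h2, ← lintegral_const_mul _ hmi,
    ← lintegral_add_right _ (by fun_prop),
    ← lintegral_add_right _ (measurable_one.indicator measurableSet_Ioi)]
  apply lintegral_mono
  intro y
  simp only
  by_cases hy0 : 0 < y
  swap
  · simp [indicator, hy0]
  by_cases hyM : y ≤ M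
  · have : F (Ioi ((x - t) / y)) ≤ F (Ioi ((x - t) / M)) := by
      apply measure_mono (Ioi_subset_Ioi _)
      exact div_le_div_of_nonneg_left (by linarith) hy0 hyM
    simp only [indicator, mem_Ioi, hy0, if_true, mem_Ioc, hyM, true_and]
    rw [add_assoc]
    exact this.trans le_self_add
  push Not at hyM
  by_cases hyd : δ * x < y
  · simp only [indicator, mem_Ioi, hy0, if_true, hyd, Pi.one_apply]
    exact le_trans prob_le_one le_add_self
  push Not at hyd
  have hz : x / y ≥ 1 / δ := by
    rw [ge_iff_le, div_le_div_iff₀ hδ hy0]; linarith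
  simp only [indicator, mem_Ioi, hy0, if_true]
  refine le_trans ?_ le_self_add
  refine le_trans ?_ le_add_self
  refine le_trans ?_ (hL _ hz)
  apply measure_mono (Ioi_subset_Ioi _)
  rw [sub_div]
  gcongr

lemma prodLaw_lower_aux (F G : Measure ℝ) [IsProbabilityMeasure F] [IsFiniteMeasure G]
    (hG : ∀ᵐ y ∂G, 0 ≤ y) {q δ x t c : ℝ} (hq : ∀ᵐ y ∂G, q * y ≤ 1)
    (hx : 0 < x) (ht : 0 < t) (hδ : 0 < δ) (hxt : t ≤ x)
    (hL : ∀ z ≥ 1 / δ, ENNReal.ofReal c * F (Ioi z) ≤ F (Ioi (z - q * t))) :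
    ENNReal.ofReal c * prodLaw F G (Ioi x) ≤
      prodLaw F G (Ioi (x - t)) + ENNReal.ofReal c * G (Ioi (δ * x)) := by
  have hm0 : Measurable (fun y : ℝ => F (Ioi (x / y))) := by
    simpa only [sub_zero] using measurable_tail_div F x 0
  rw [prodLaw_Ioi F G hG (x := x - t) (by linarith), prodLaw_Ioi F G hG hx.le,
    ← lintegral_indicator measurableSet_Ioi, ← lintegral_indicator measurableSet_Ioi]
  have h2 : G (Ioi (δ * x)) = ∫⁻ y, (Ioi (δ * x)).indicator 1 y ∂G := by
    rw [lintegral_indicator_one measurableSet_Ioi]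
  have hmi := hm0.indicator (measurableSet_Ioi (a := (0 : ℝ)))
  rw [h2, ← lintegral_const_mul _ hmi,
    ← lintegral_const_mul _ (measurable_one.indicator measurableSet_Ioi),
    ← lintegral_add_right _ ((measurable_one.indicator measurableSet_Ioi).const_mul _)]
  apply lintegral_mono_ae
  filter_upwards [hq] with y hqy
  by_cases hy0 : 0 < y
  swap
  · simp [indicator, hy0]
  by_cases hyd : δ * x < y
  · simp only [indicator, mem_Ioi, hy0, if_true, hyd, Pi.one_apply]
    refine le_trans ?_ le_add_self
    gcongr
    exact prob_le_one
  push Not at hyd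
  have hz : x / y ≥ 1 / δ := by
    rw [ge_iff_le, div_le_div_iff₀ hδ hy0]; linarith
  simp only [indicator, mem_Ioi, hy0, if_true]
  refine le_trans ?_ le_self_add
  refine (hL _ hz).trans ?_
  apply measure_mono (Ioi_subset_Ioi _)
  rw [sub_div]
  gcongr
  rw [le_div_iff₀ hy0]
  nlinarith




lemma prodLaw_exists_M (F G : Measure ℝ) [IsProbabilityMeasure F] [IsFiniteMeasure G]
    {γ q : ℝ} (hγ : 0 ≤ γ) (hL : LgP F γ)
    (hq2 : ∀ r > q, ∃ M > 0, 1 / M < r ∧ G (Ioi M) ≠ 0) {t c e : ℝ} (ht : 0 < t) (he : 0 < e)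
    (hc : Real.exp (γ * q * t) < c) :
    ∃ M > 0, Real.exp (γ * (t / M)) < c ∧
      ∀ᶠ x in atTop, G (Ioc 0 M) * F (Ioi ((x - t) / M)) ≤
        ENNReal.ofReal e * prodLaw F G (Ioi x) := by
  rcases hγ.eq_or_lt with h0 | h0
  · have hG0 : G (Ioi 0) ≠ 0 := by
      obtain ⟨M, hM, _, hGM⟩ := hq2 (q + 1) (by linarith)
      intro h
      exact hGM (measure_mono_null (Ioi_subset_Ioi hM.le) h)
    obtain ⟨M, hM, hMG⟩ := exists_small_mass hG0 he
    refine ⟨M, hM, by rw [← h0] at hc ⊢; simpa using hc, ?_⟩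
    filter_upwards [eventually_ge_atTop (2 * t)] with x hx
    have hx0 : 0 ≤ x := by linarith
    calc G (Ioc 0 M) * F (Ioi ((x - t) / M))
        ≤ (ENNReal.ofReal e * G (Ioi (2 * M))) * F (Ioi (x / (2 * M))) := by
          refine mul_le_mul' hMG (measure_mono (Ioi_subset_Ioi ?_))
          rw [div_le_div_iff₀ (by positivity) hM]
          nlinarith
      _ = ENNReal.ofReal e * (F (Ioi (x / (2 * M))) * G (Ioi (2 * M))) := by ring
      _ ≤ _ := by
          gcongr
          exact prodLaw_ge F G hx0 (by positivity)
  · obtain ⟨r, hr1, hr2⟩ : ∃ r > q, Real.exp (γ * r * t) < c := by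
      have hcont : ContinuousAt (fun r => Real.exp (γ * r * t)) q := by fun_prop
      have h1 : ∀ᶠ r in nhds q, Real.exp (γ * r * t) < c := hcont.eventually_lt_const hc
      have h2 : ∀ᶠ r in nhdsWithin q (Ioi q), Real.exp (γ * r * t) < c := h1.filter_mono nhdsWithin_le_nhds
      obtain ⟨r, h3, h4⟩ := (h2.and self_mem_nhdsWithin).exists
      exact ⟨r, h4, h3⟩
    obtain ⟨M, hM, hMr, hGM⟩ := hq2 r hr1
    obtain ⟨M', hMM', hGM'⟩ := exists_gt_tail hGM
    have hM' : 0 < M' := hM.trans hMM'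
    set g : ℝ := (G (Ioc 0 M)).toReal with hg
    have hg0 : 0 ≤ g := ENNReal.toReal_nonneg
    have hgof : G (Ioc 0 M) = ENNReal.ofReal g := (ENNReal.ofReal_toReal (measure_ne_top _ _)).symm
    set k : ℝ := (G (Ioi M')).toReal with hk
    have hk0 : 0 < k := ENNReal.toReal_pos hGM' (measure_ne_top _ _)
    have hkof : G (Ioi M') = ENNReal.ofReal k := (ENNReal.ofReal_toReal (measure_ne_top _ _)).symm
    obtain ⟨u, hu, hdec⟩ := hL.decay h0 (ε := e * k / (g + 1)) (by positivity)
    refine ⟨M, hM, ?_, ?_⟩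
    · refine lt_of_le_of_lt (Real.exp_le_exp.2 ?_) hr2
      have : t / M = (1 / M) * t := by ring
      rw [this, mul_assoc]
      gcongr
    have hd : 0 < 1 / M - 1 / M' := sub_pos.2 (one_div_lt_one_div_of_lt hM hMM')
    filter_upwards [(tendsto_id.atTop_div_const hM').eventually hdec,
      eventually_ge_atTop ((u + t / M) / (1 / M - 1 / M')), eventually_ge_atTop 0] with x hx hx1 hx0
    simp only [id] at hx
    rw [div_le_iff₀ hd] at hx1
    calc G (Ioc 0 M) * F (Ioi ((x - t) / M))
        ≤ ENNReal.ofReal g * (ENNReal.ofReal (e * k / (g + 1)) * F (Ioi (x / M'))) := by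
          rw [hgof]
          refine mul_le_mul' le_rfl (le_trans (measure_mono (Ioi_subset_Ioi ?_)) hx)
          have e1 : (x - t) / M = x * (1 / M - 1 / M') + x / M' - t / M := by field_simp; ring
          rw [e1]; linarith
      _ = ENNReal.ofReal (g * (e * k / (g + 1))) * F (Ioi (x / M')) := by
          rw [ENNReal.ofReal_mul hg0, mul_assoc]
      _ ≤ ENNReal.ofReal (e * k) * F (Ioi (x / M')) := by
          refine mul_le_mul' (ENNReal.ofReal_le_ofReal ?_) le_rfl
          rw [mul_div_assoc', div_le_iff₀ (by positivity)]
          nlinarith [mul_pos he hk0]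
      _ = ENNReal.ofReal e * (F (Ioi (x / M')) * G (Ioi M')) := by
          rw [hkof, ENNReal.ofReal_mul he.le]; ring
      _ ≤ _ := by
          gcongr
          exact prodLaw_ge F G hx0 hM'

lemma LgP_prodLaw (F G : Measure ℝ) [IsProbabilityMeasure F] [IsFiniteMeasure G]
    (hG : ∀ᵐ y ∂G, 0 ≤ y) {γ q : ℝ} (hγ : 0 ≤ γ) (hq : 0 ≤ q) (hL : LgP F γ)
    (hS : SmallG G (prodLaw F G))
    (hq1 : ∀ᵐ y ∂G, q * y ≤ 1)
    (hq2 : ∀ r > q, ∃ M > 0, 1 / M < r ∧ G (Ioi M) ≠ 0) : LgP (prodLaw F G) (γ * q) := by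
  refine ⟨?_, ?_, ?_⟩
  · intro x
    obtain ⟨M, hM, _, hGM⟩ := hq2 (q + 1) (by linarith)
    have h1 := prodLaw_ge F G (le_max_right x 0) hM
    have h2 : prodLaw F G (Ioi (max x 0)) ≤ prodLaw F G (Ioi x) :=
      measure_mono (Ioi_subset_Ioi (le_max_left _ _))
    intro h
    have h3 := h1.trans h2
    rw [h] at h3
    simp only [nonpos_iff_eq_zero, mul_eq_zero] at h3
    rcases h3 with h3 | h3
    · exact hL.1 _ h3
    · exact hGM h3
  · intro t ht c hc
    obtain ⟨c0, hc0, hc1⟩ := exists_between hc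
    have hc0p : 0 < c0 := (Real.exp_pos _).trans hc0
    set e : ℝ := (c - c0) / 2 with he
    have he0 : 0 < e := by rw [he]; linarith
    obtain ⟨M, hM, hMc, hMev⟩ := prodLaw_exists_M F G hγ hL hq2 ht he0 hc0
    obtain ⟨z0, hz0⟩ := eventually_atTop.1 (hL.2.1 (t / M) (by positivity) c0 hMc)
    set m := max z0 1
    have hm0 : 0 < m := lt_max_of_lt_right one_pos
    filter_upwards [hMev, hS (1 / m) (by positivity) e he0, eventually_ge_atTop t,
      eventually_gt_atTop 0] with x h1 h2 h3 h4
    refine (prodLaw_upper_aux F G hG hM h4 ht (δ := 1 / m) (c := c0) (by positivity) h3 ?_).trans ?_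
    · intro z hz
      apply hz0
      rw [one_div_one_div] at hz
      exact (le_max_left _ _).trans hz
    · calc _ ≤ ENNReal.ofReal e * prodLaw F G (Ioi x) + ENNReal.ofReal c0 * prodLaw F G (Ioi x) +
          ENNReal.ofReal e * prodLaw F G (Ioi x) := by gcongr
        _ = ENNReal.ofReal (e + c0 + e) * prodLaw F G (Ioi x) := by
          rw [ENNReal.ofReal_add (by positivity) he0.le, ENNReal.ofReal_add he0.le hc0p.le]; ring
        _ = _ := by congr 2; rw [he]; ring
  · intro t ht c hc
    rcases le_or_gt c 0 with hcn | hcp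
    · simp [ENNReal.ofReal_of_nonpos hcn]
    obtain ⟨c0, hc0, hc1⟩ := exists_between hc
    have hc0p : 0 < c0 := hcp.trans hc0
    have hev : ∀ᶠ z in atTop, ENNReal.ofReal c0 * F (Ioi z) ≤ F (Ioi (z - q * t)) := by
      rcases hq.eq_or_lt with hq0 | hq0
      · refine Eventually.of_forall fun z => ?_
        rw [← hq0] at hc1 ⊢
        simp only [mul_zero, zero_mul, Real.exp_zero] at hc1
        simp only [zero_mul, sub_zero]
        calc _ ≤ 1 * F (Ioi z) := by
              gcongr
              exact ENNReal.ofReal_le_one.2 hc1.le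
          _ = _ := one_mul _
      · exact hL.2.2 (q * t) (by positivity) c0 (by rwa [mul_assoc] at hc1)
    obtain ⟨z0, hz0⟩ := eventually_atTop.1 hev
    set m := max z0 1
    have hm0 : 0 < m := lt_max_of_lt_right one_pos
    filter_upwards [hS (1 / m) (by positivity) ((c0 - c) / c0) (div_pos (by linarith) hc0p),
      eventually_ge_atTop t, eventually_gt_atTop 0] with x h2 h3 h4
    have hmain := prodLaw_lower_aux F G hG hq1 h4 ht (δ := 1 / m) (c := c0) (by positivity) h3 (by
      intro z hz
      apply hz0
      rw [one_div_one_div] at hz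
      exact (le_max_left _ _).trans hz)
    have h5 : ENNReal.ofReal c0 * G (Ioi (1 / m * x)) ≤
        ENNReal.ofReal (c0 - c) * prodLaw F G (Ioi x) := by
      calc _ ≤ ENNReal.ofReal c0 * (ENNReal.ofReal ((c0 - c) / c0) * prodLaw F G (Ioi x)) := by
            gcongr
        _ = _ := by
            rw [← mul_assoc, ← ENNReal.ofReal_mul hc0p.le]; congr 2; field_simp
    have h6 : ENNReal.ofReal c0 = ENNReal.ofReal c + ENNReal.ofReal (c0 - c) := by
      rw [← ENNReal.ofReal_add hcp.le (by linarith)]; congr 1; ring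
    have h7 := hmain.trans (add_le_add le_rfl h5)
    rw [h6, add_mul] at h7
    exact (ENNReal.add_le_add_iff_right
      (ENNReal.mul_ne_top ENNReal.ofReal_ne_top (measure_ne_top _ _))).1 h7




lemma LgP_of_ratio (μ : Measure ℝ) [IsFiniteMeasure μ] {γ : ℝ} (h0 : ∀ x, μ (Ioi x) ≠ 0)
    (h : ∀ t > 0, Tendsto (fun x => μ.real (Ioi (x - t)) / μ.real (Ioi x)) atTop
      (nhds (Real.exp (γ * t)))) : LgP μ γ := by
  have hof : ∀ s : Set ℝ, μ s = ENNReal.ofReal (μ.real s) := fun s => by simp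
  have hpos : ∀ x, 0 < μ.real (Ioi x) := fun x => ENNReal.toReal_pos (h0 x) (measure_ne_top _ _)
  refine ⟨h0, ?_, ?_⟩
  · intro t ht c hc
    filter_upwards [(h t ht).eventually_lt_const hc] with x hx
    rw [div_lt_iff₀ (hpos x)] at hx
    rw [hof, hof (Ioi x), ← ENNReal.ofReal_mul ((Real.exp_pos _).trans hc).le]
    exact ENNReal.ofReal_le_ofReal hx.le
  · intro t ht c hc
    rcases le_or_gt c 0 with hcn | hcp
    · simp [ENNReal.ofReal_of_nonpos hcn]
    filter_upwards [(h t ht).eventually_const_lt hc] with x hx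
    rw [lt_div_iff₀ (hpos x)] at hx
    rw [hof (Ioi x), hof (Ioi (x - t)), ← ENNReal.ofReal_mul hcp.le]
    exact ENNReal.ofReal_le_ofReal hx.le

lemma LgP.ratio_pos {μ : Measure ℝ} [IsFiniteMeasure μ] {γ : ℝ} (h : LgP μ γ) {t : ℝ} (ht : 0 < t) :
    Tendsto (fun x => μ.real (Ioi (x - t)) / μ.real (Ioi x)) atTop
      (nhds (Real.exp (γ * t))) := by
  have hpos : ∀ x, 0 < μ.real (Ioi x) := fun x => ENNReal.toReal_pos (h.1 x) (measure_ne_top _ _)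
  rw [tendsto_order]
  constructor
  · intro c hc
    rcases lt_or_ge c 0 with hcn | hcp
    · exact Eventually.of_forall fun x => hcn.trans_le (div_nonneg (hpos _).le (hpos _).le)
    obtain ⟨c0, hc0, hc1⟩ := exists_between hc
    filter_upwards [h.2.2 t ht c0 hc1] with x hx
    rw [lt_div_iff₀ (hpos x)]
    have := ENNReal.toReal_mono (measure_ne_top _ _) hx
    rw [ENNReal.toReal_mul, ENNReal.toReal_ofReal (hcp.trans hc0.le)] at this
    exact lt_of_lt_of_le (mul_lt_mul_of_pos_right hc0 (hpos x)) this
  · intro c hc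
    obtain ⟨c0, hc0, hc1⟩ := exists_between hc
    have hc0p : 0 < c0 := (Real.exp_pos _).trans hc0
    filter_upwards [h.2.1 t ht c0 hc0] with x hx
    rw [div_lt_iff₀ (hpos x)]
    have := ENNReal.toReal_mono (ENNReal.mul_ne_top ENNReal.ofReal_ne_top (measure_ne_top _ _)) hx
    rw [ENNReal.toReal_mul, ENNReal.toReal_ofReal hc0p.le] at this
    exact lt_of_le_of_lt this (mul_lt_mul_of_pos_right hc1 (hpos x))

lemma LgP.ratio {μ : Measure ℝ} [IsFiniteMeasure μ] {γ : ℝ} (h : LgP μ γ) (t : ℝ) :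
    Tendsto (fun x => μ.real (Ioi (x - t)) / μ.real (Ioi x)) atTop
      (nhds (Real.exp (γ * t))) := by
  have hpos : ∀ x, 0 < μ.real (Ioi x) := fun x => ENNReal.toReal_pos (h.1 x) (measure_ne_top _ _)
  rcases lt_trichotomy t 0 with ht | ht | ht
  · have h1 := h.ratio_pos (neg_pos.2 ht)
    have h2 := (h1.comp (tendsto_atTop_add_const_right atTop (-t) tendsto_id)).inv₀
      (Real.exp_pos _).ne'
    have h3 : (Real.exp (γ * -t))⁻¹ = Real.exp (γ * t) := by rw [← Real.exp_neg]; congr 1; ring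
    rw [h3] at h2
    refine h2.congr fun x => ?_
    simp only [Function.comp, id, inv_div]
    congr 3; ring
  · subst ht
    simp only [sub_zero, mul_zero, Real.exp_zero]
    refine tendsto_const_nhds.congr fun x => ?_
    rw [div_self (hpos x).ne']
  · exact h.ratio_pos ht

def ISet (A x : ℝ) : Set (ℝ × ℝ) := {p | x < p.1 + p.2 ∧ p.1 ≤ A}

lemma measurableSet_ISet (A x : ℝ) : MeasurableSet (ISet A x) := by
  have h : ISet A x = {p : ℝ × ℝ | x < p.1 + p.2} ∩ {p : ℝ × ℝ | p.1 ≤ A} := by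
    ext p; simp [ISet]
  rw [h]
  exact (measurableSet_lt measurable_const (by fun_prop)).inter
    (measurableSet_le (by fun_prop) measurable_const)

lemma ISet_real (μ : Measure ℝ) [IsFiniteMeasure μ] (A x : ℝ) :
    (μ.prod μ).real (ISet A x) = ∫ y in Iic A, μ.real (Ioi (x - y)) ∂μ := by
  have hanti : Monotone (fun y : ℝ => μ (Ioi (x - y))) :=
    fun a b hab => measure_mono (Ioi_subset_Ioi (by linarith))
  simp only [Measure.real]
  rw [Measure.prod_apply (measurableSet_ISet A x), integral_toReal hanti.measurable.aemeasurable
    (Eventually.of_forall fun y => measure_lt_top _ _), ← lintegral_indicator measurableSet_Iic]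
  congr 1
  apply lintegral_congr
  intro y
  by_cases hy : y ≤ A
  · simp only [indicator, mem_Iic, hy, if_true]
    congr 1
    ext z
    simp only [ISet, mem_preimage, mem_ofPred_eq, hy, and_true, mem_Ioi]
    constructor <;> intro <;> linarith
  · simp [indicator, hy, ISet]

lemma ISet_tendsto (μ : Measure ℝ) [IsFiniteMeasure μ] {γ : ℝ} (h : LgP μ γ) (A : ℝ) :
    Tendsto (fun x => (μ.prod μ).real (ISet A x) / μ.real (Ioi x)) atTop
      (nhds (∫ y in Iic A, Real.exp (γ * y) ∂μ)) := by
  have hpos : ∀ x, 0 < μ.real (Ioi x) := fun x => ENNReal.toReal_pos (h.1 x) (measure_ne_top _ _)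
  simp_rw [ISet_real, ← integral_div]
  apply tendsto_integral_filter_of_dominated_convergence (fun _ => Real.exp (γ * A) + 1)
  · refine Eventually.of_forall fun x => ?_
    have hanti : Monotone (fun y : ℝ => μ.real (Ioi (x - y))) :=
      fun a b hab => measureReal_mono (Ioi_subset_Ioi (by linarith))
    exact (hanti.measurable.div_const _).aestronglyMeasurable
  · filter_upwards [(h.ratio A).eventually_lt_const (lt_add_one _)] with x hx
    filter_upwards [ae_restrict_mem measurableSet_Iic] with y hy
    rw [Real.norm_of_nonneg (div_nonneg measureReal_nonneg measureReal_nonneg)]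
    refine le_trans ?_ hx.le
    have := hpos x
    gcongr
    · exact measure_ne_top _ _
    · exact hy
  · exact integrable_const _
  · exact Eventually.of_forall fun y => h.ratio y

lemma conv_decomp (μ : Measure ℝ) [IsFiniteMeasure μ] {A x : ℝ} (hx : 2 * A ≤ x) :
    (μ.conv μ).real (Ioi x) =
      2 * (μ.prod μ).real (ISet A x) + (μ.prod μ).real (JSet A x) := by
  have hswap : (μ.prod μ).real (Prod.swap ⁻¹' (ISet A x)) = (μ.prod μ).real (ISet A x) := by
    rw [measureReal_def, measureReal_def]
    congr 1
    conv_rhs => rw [← Measure.prod_swap, Measure.map_apply measurable_swap (measurableSet_ISet A x)]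
  have hs : MeasurableSet (Prod.swap ⁻¹' (ISet A x) : Set (ℝ × ℝ)) :=
    (measurableSet_ISet A x).preimage measurable_swap
  have h1 : (μ.conv μ).real (Ioi x) = (μ.prod μ).real
      (ISet A x ∪ (Prod.swap ⁻¹' (ISet A x) ∪ JSet A x)) := by
    rw [measureReal_def, measureReal_def, Measure.conv,
      Measure.map_apply (by fun_prop) measurableSet_Ioi]
    congr 2
    ext ⟨u, v⟩
    simp only [ISet, JSet, mem_preimage, mem_Ioi, mem_union, mem_ofPred_eq, Prod.swap]
    constructor
    · intro h
      by_cases h1 : u ≤ A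
      · exact Or.inl ⟨h, h1⟩
      by_cases h2 : v ≤ A
      · exact Or.inr (Or.inl ⟨by linarith, h2⟩)
      · exact Or.inr (Or.inr ⟨h, not_le.1 h1, not_le.1 h2⟩)
    · rintro (h | h | h)
      · exact h.1
      · linarith [h.1]
      · exact h.1
  rw [h1, measureReal_union, measureReal_union, hswap]
  · ring
  · rw [Set.disjoint_left]
    rintro ⟨u, v⟩ h2 h3
    simp only [ISet, JSet, mem_preimage, mem_ofPred_eq, Prod.swap] at h2 h3
    linarith [h2.2, h3.2.2]
  · exact measurableSet_JSet A x
  · rw [Set.disjoint_left]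
    rintro ⟨u, v⟩ h2 h3
    simp only [ISet, JSet, mem_preimage, mem_ofPred_eq, Prod.swap, mem_union] at h2 h3
    rcases h3 with h3 | h3
    · linarith [h2.1, h2.2, h3.2]
    · linarith [h2.2, h3.2.1]
  · exact hs.union (measurableSet_JSet A x)

lemma JcP_of_conv (μ : Measure ℝ) [IsFiniteMeasure μ] {γ : ℝ} (h : LgP μ γ)
    (hi : Integrable (fun y => Real.exp (γ * y)) μ)
    (hc : Tendsto (fun x => (μ.conv μ).real (Ioi x) / μ.real (Ioi x)) atTop
      (nhds (2 * ∫ y, Real.exp (γ * y) ∂μ))) : JcP μ := by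
  intro ε hε
  have hpos : ∀ x, 0 < μ.real (Ioi x) := fun x => ENNReal.toReal_pos (h.1 x) (measure_ne_top _ _)
  have hm : Tendsto (fun A : ℝ => ∫ y in Iic A, Real.exp (γ * y) ∂μ) atTop
      (nhds (∫ y, Real.exp (γ * y) ∂μ)) :=
    (aecover_Iic tendsto_id).integral_tendsto_of_countably_generated hi
  obtain ⟨A, hA1, hA0⟩ := ((hm.eventually_const_lt (show (∫ y, Real.exp (γ * y) ∂μ) - ε / 4 < _ by
    linarith)).and (eventually_gt_atTop 0)).exists
  refine ⟨A, hA0, ?_⟩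
  have hlim := hc.sub ((ISet_tendsto μ h A).const_mul 2)
  filter_upwards [hlim.eventually_lt_const (show _ < ε by linarith),
    eventually_ge_atTop (2 * A)] with x hx hx2
  rw [conv_decomp μ hx2] at hx
  have h1 : (2 * (μ.prod μ).real (ISet A x) + (μ.prod μ).real (JSet A x)) / μ.real (Ioi x) -
      2 * ((μ.prod μ).real (ISet A x) / μ.real (Ioi x)) =
      (μ.prod μ).real (JSet A x) / μ.real (Ioi x) := by ring
  rw [h1, div_lt_iff₀ (hpos x)] at hx
  have := ENNReal.ofReal_le_ofReal hx.le
  rw [ENNReal.ofReal_mul hε.le] at this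
  simpa using this

lemma conv_of_JcP (μ : Measure ℝ) [IsFiniteMeasure μ] {γ : ℝ} (hγ : 0 ≤ γ) (h : LgP μ γ)
    (hJ : JcP μ) :
    Integrable (fun y => Real.exp (γ * y)) μ ∧
    Tendsto (fun x => (μ.conv μ).real (Ioi x) / μ.real (Ioi x)) atTop
      (nhds (2 * ∫ y, Real.exp (γ * y) ∂μ)) := by
  have hpos : ∀ x, 0 < μ.real (Ioi x) := fun x => ENNReal.toReal_pos (h.1 x) (measure_ne_top _ _)
  have hJ' : ∀ ε : ℝ, 0 < ε → ∃ A > 0, ∀ᶠ x in atTop,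
      (μ.prod μ).real (JSet A x) / μ.real (Ioi x) ≤ ε := by
    intro ε hε
    obtain ⟨A, hA, hx⟩ := hJ ε hε
    refine ⟨A, hA, ?_⟩
    filter_upwards [hx] with x hx
    rw [div_le_iff₀ (hpos x)]
    have := ENNReal.toReal_mono (ENNReal.mul_ne_top ENNReal.ofReal_ne_top (measure_ne_top _ _)) hx
    rwa [ENNReal.toReal_mul, ENNReal.toReal_ofReal hε.le] at this
  have hbd : ∀ ε A : ℝ, (∀ᶠ x in atTop,
      (μ.prod μ).real (JSet A x) / μ.real (Ioi x) ≤ ε) → ∀ B,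
      ∫ y in Iic B, Real.exp (γ * y) ∂μ ≤ (∫ y in Iic A, Real.exp (γ * y) ∂μ) + ε := by
    intro ε A hA B
    refine le_of_tendsto_of_tendsto (ISet_tendsto μ h B) ((ISet_tendsto μ h A).add_const ε) ?_
    filter_upwards [hA, eventually_ge_atTop (A + B)] with x hx hxAB
    have hsub : ISet B x ⊆ ISet A x ∪ JSet A x := by
      rintro ⟨u, v⟩ ⟨h1, h2⟩
      simp only at h1 h2
      by_cases hu : u ≤ A
      · exact Or.inl ⟨h1, hu⟩
      · exact Or.inr ⟨h1, not_le.1 hu, by simp only; linarith⟩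
    have h1 : (μ.prod μ).real (ISet B x) ≤ (μ.prod μ).real (ISet A x) + (μ.prod μ).real (JSet A x) :=
      (measureReal_mono hsub).trans (measureReal_union_le _ _)
    calc _ ≤ ((μ.prod μ).real (ISet A x) + (μ.prod μ).real (JSet A x)) / μ.real (Ioi x) := by
          have := hpos x
          gcongr
      _ ≤ _ := by rw [add_div]; linarith
  have hIntg : Integrable (fun y => Real.exp (γ * y)) μ := by
    obtain ⟨A, hA, hx⟩ := hJ' 1 one_pos
    refine (aecover_Iic (μ := μ) (tendsto_id (α := ℝ))).integrable_of_integral_bounded_of_nonneg_ae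
      ((∫ y in Iic A, Real.exp (γ * y) ∂μ) + 1) ?_ (Eventually.of_forall fun y => (Real.exp_pos _).le)
      (Eventually.of_forall fun B => hbd 1 A hx B)
    intro B
    refine Measure.integrableOn_of_bounded (M := Real.exp (γ * B)) (measure_ne_top _ _)
      (by fun_prop) ?_
    filter_upwards [ae_restrict_mem measurableSet_Iic] with y hy
    rw [Real.norm_of_nonneg (Real.exp_pos _).le]
    gcongr
    exact hy
  refine ⟨hIntg, ?_⟩
  have hm : Tendsto (fun A : ℝ => ∫ y in Iic A, Real.exp (γ * y) ∂μ) atTop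
      (nhds (∫ y, Real.exp (γ * y) ∂μ)) :=
    (aecover_Iic tendsto_id).integral_tendsto_of_countably_generated hIntg
  rw [Metric.tendsto_atTop']
  intro ε hε
  obtain ⟨A, hA, hx⟩ := hJ' (ε / 8) (by positivity)
  have h1 : (∫ y, Real.exp (γ * y) ∂μ) ≤ (∫ y in Iic A, Real.exp (γ * y) ∂μ) + ε / 8 :=
    le_of_tendsto hm (Eventually.of_forall fun B => hbd _ A hx B)
  have h2 : (∫ y in Iic A, Real.exp (γ * y) ∂μ) ≤ ∫ y, Real.exp (γ * y) ∂μ :=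
    setIntegral_le_integral hIntg (Eventually.of_forall fun y => (Real.exp_pos _).le)
  have hI := ISet_tendsto μ h A
  have hev := (hI.eventually_lt_const (lt_add_of_pos_right _ (show 0 < ε / 8 by positivity))).and
    ((hI.eventually_const_lt (sub_lt_self _ (show 0 < ε / 8 by positivity))).and
      (hx.and (eventually_ge_atTop (2 * A))))
  obtain ⟨N, hN⟩ := eventually_atTop.1 hev
  refine ⟨N, fun x hxN => ?_⟩
  obtain ⟨e1, e2, e3, e4⟩ := hN x hxN.le
  rw [conv_decomp μ e4, Real.dist_eq]
  have e5 : (2 * (μ.prod μ).real (ISet A x) + (μ.prod μ).real (JSet A x)) / μ.real (Ioi x) =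
      2 * ((μ.prod μ).real (ISet A x) / μ.real (Ioi x)) +
      (μ.prod μ).real (JSet A x) / μ.real (Ioi x) := by ring
  have e6 : 0 ≤ (μ.prod μ).real (JSet A x) / μ.real (Ioi x) := by
    have := hpos x; positivity
  rw [e5, abs_lt]
  constructor <;> linarith



theorem frequently_null_endpoint (G : Measure ℝ) [IsFiniteMeasure G] (y : ℝ) :
    ∃ᶠ δ in nhdsWithin (0:ℝ) (Ioi 0), 0 < δ ∧ G {y - δ} = 0 := by
  intro hcon
  have hc : {z : ℝ | 0 < G {z}}.Countable :=
    Measure.countable_meas_pos_of_disjoint_iUnion (μ := G) (As := fun z : ℝ => {z})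
      (fun z => measurableSet_singleton z) (fun a b hab => by simpa using hab)
  rw [eventually_nhdsWithin_iff, Metric.eventually_nhds_iff] at hcon
  obtain ⟨u, hu, hcon⟩ := hcon
  have hsub : Ioo (y - u) y ⊆ {z : ℝ | 0 < G {z}} := by
    intro z hz
    have h1 := @hcon (y - z) (by rw [Real.dist_eq, sub_zero, abs_of_pos (by linarith [hz.2])]; linarith [hz.1])
      (by simpa using hz.2)
    have h2 : y - (y - z) = z := by ring
    beta_reduce at h1
    rw [h2] at h1
    show 0 < G {z}
    rw [pos_iff_ne_zero]
    intro h0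
    exact h1 ⟨by linarith [hz.2], h0⟩
  have h3 : (Ioo (y - u) y).Countable := hc.mono hsub
  have h4 : volume (Ioo (y - u) y) = 0 := h3.measure_zero volume
  rw [Real.volume_Ioo] at h4
  simp at h4
  linarith

section disint

variable {Ω : Type*} [MeasureSpace Ω] [IsProbabilityMeasure (ℙ : Measure Ω)]

theorem K_ae (X Y : Ω → ℝ) (hXm : Measurable X) (hYm : Measurable Y) (h : ℝ → ℝ) (K : ℝ → ℝ → ℝ)
    (hA1 : Assumption1 X Y h K) (x : ℝ) :
    ∀ᵐ y ∂(Measure.map Y ℙ), K x y = (condDistrib X Y ℙ y (Ioi x)).toReal := by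
  set G := Measure.map Y (ℙ : Measure Ω) with hG
  have : IsProbabilityMeasure G := Measure.isProbabilityMeasure_map hYm.aemeasurable
  set ρ := G.withDensity (fun y => condDistrib X Y ℙ y (Ioi x)) with hρ
  have hm : Measurable (fun y => condDistrib X Y ℙ y (Ioi x)) :=
    Kernel.measurable_coe _ measurableSet_Ioi
  have hρs : ∀ s, MeasurableSet s → ρ s = ℙ {ω | x < X ω ∧ Y ω ∈ s} := by
    intro s hs
    rw [hρ, withDensity_apply _ hs, ← Measure.compProd_apply_prod hs measurableSet_Ioi, hG,
      compProd_map_condDistrib hXm.aemeasurable,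
      Measure.map_apply (hYm.prodMk hXm) (hs.prod measurableSet_Ioi)]
    congr 1
    ext ω
    simp [and_comm]
  have hGs : ∀ s, MeasurableSet s → G s = ℙ {ω | Y ω ∈ s} := by
    intro s hs
    rw [hG, Measure.map_apply hYm hs]; rfl
  have hle : ∀ s, MeasurableSet s → ρ s ≤ G s := by
    intro s hs
    rw [hρs s hs, hGs s hs]
    exact measure_mono (fun ω hω => hω.2)
  have : IsFiniteMeasure ρ := ⟨by
    refine lt_of_le_of_lt (hle univ MeasurableSet.univ) (measure_lt_top _ _)⟩
  filter_upwards [Besicovitch.ae_tendsto_rnDeriv ρ G, Measure.rnDeriv_withDensity G hm,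
    (Measure.support_mem_ae : G.support ∈ ae G)] with y h1 h2 h3
  rw [h2] at h1
  have hys : y ∈ distSupport Y := by
    intro δ hδ
    have := (Measure.mem_support_iff_forall (μ := G) y).1 h3 (Ioo (y - δ) (y + δ))
      (Ioo_mem_nhds (by linarith) (by linarith))
    rwa [hGs _ measurableSet_Ioo] at this
  have h4 := hA1.2.2.2.1 y hys x
  have h5 : Tendsto (fun r => (ρ (Metric.closedBall y r) / G (Metric.closedBall y r)).toReal)
      (nhdsWithin 0 (Ioi 0)) (nhds (condDistrib X Y ℙ y (Ioi x)).toReal) :=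
    (ENNReal.tendsto_toReal (measure_ne_top _ _)).comp h1
  refine tendsto_nhds_unique_of_frequently_eq h4 h5 ?_
  refine (frequently_null_endpoint G y).mono ?_
  rintro δ ⟨hδ, h0⟩
  have hcb : Metric.closedBall y δ = {y - δ} ∪ Ioc (y - δ) (y + δ) := by
    rw [Real.closedBall_eq_Icc, ← Ioc_insert_left (by linarith)]; rfl
  have hn : ∀ m : Measure ℝ, m {y - δ} = 0 → m (Metric.closedBall y δ) = m (Ioc (y - δ) (y + δ)) := by
    intro m hm0
    rw [hcb]
    refine le_antisymm ((measure_union_le _ _).trans (by rw [hm0, zero_add])) (measure_mono subset_union_right)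
  have h0' : ρ {y - δ} = 0 := le_antisymm ((hle _ (measurableSet_singleton _)).trans h0.le) (zero_le)
  rw [hn ρ h0', hn G h0, ENNReal.toReal_div, hρs _ measurableSet_Ioc, hGs _ measurableSet_Ioc]

end disint



theorem tail_le_of_rat (m : Measure ℝ) (z : ℝ) (b : ENNReal)
    (hb : ∀ q : ℚ, z < q → m (Ioi (q:ℝ)) ≤ b) : m (Ioi z) ≤ b := by
  have hU : Ioi z = ⋃ q : {q : ℚ // z < q}, Ioi ((q.1 : ℚ) : ℝ) := by
    ext u
    simp only [mem_Ioi, mem_iUnion]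
    constructor
    · intro hu
      obtain ⟨q, h1, h2⟩ := exists_rat_btwn hu
      exact ⟨⟨q, h1⟩, h2⟩
    · rintro ⟨q, hq⟩
      exact q.2.trans hq
  have hd : Directed (· ⊆ ·) (fun q : {q : ℚ // z < q} => Ioi ((q.1 : ℚ) : ℝ)) := by
    intro a b
    rcases le_total a.1 b.1 with hab | hab
    · exact ⟨a, subset_rfl, Ioi_subset_Ioi (by exact_mod_cast hab)⟩
    · exact ⟨b, Ioi_subset_Ioi (by exact_mod_cast hab), subset_rfl⟩
  rw [hU, hd.measure_iUnion]
  exact iSup_le (fun q => hb q.1 q.2)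

/-- The kernel tail comparison. -/
def KB (F G : Measure ℝ) (κ : Kernel ℝ ℝ) (h : ℝ → ℝ) : Prop :=
  ∀ ε : ℝ, 0 < ε → ε < 1 → ∃ x0 : ℝ, 0 < x0 ∧ ∀ᵐ y ∂G, ∀ z, x0 ≤ z →
    κ y (Ioi z) ≤ ENNReal.ofReal ((1 + ε) * h y) * F (Ioi z) ∧
    ENNReal.ofReal ((1 - ε) * h y) * F (Ioi z) ≤ κ y (Ioi z)

theorem KB_of_assumption1 {Ω : Type*} [MeasureSpace Ω] [IsProbabilityMeasure (ℙ : Measure Ω)]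
    (X Y : Ω → ℝ) (hXm : Measurable X) (hYm : Measurable Y) (hYnonneg : ∀ ω, 0 ≤ Y ω)
    (hFunb : UnboundedDist X) (h : ℝ → ℝ) (K : ℝ → ℝ → ℝ) (hA1 : Assumption1 X Y h K) :
    KB (Measure.map X ℙ) (Measure.map Y ℙ) (condDistrib X Y ℙ) h := by
  intro ε hε hε1
  have hG0 : ∀ᵐ y ∂(Measure.map Y (ℙ : Measure Ω)), 0 ≤ y :=
    (ae_map_iff hYm.aemeasurable measurableSet_Ici).2 (Eventually.of_forall hYnonneg)
  obtain ⟨x1, hx1⟩ := eventually_atTop.1 (hA1.2.2.2.2 ε hε)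
  refine ⟨max x1 1, by positivity, ?_⟩
  have hall : ∀ᵐ y ∂(Measure.map Y (ℙ : Measure Ω)), ∀ q : ℚ,
      K q y = (condDistrib X Y ℙ y (Ioi (q:ℝ))).toReal :=
    ae_all_iff.2 (fun q => K_ae X Y hXm hYm h K hA1 q)
  filter_upwards [hG0, hall] with y hy hK z hz
  have hhy := hA1.2.1 y hy
  have hFt : ∀ x, (Measure.map X ℙ) (Ioi x) = ENNReal.ofReal (rvTail X x) := by
    intro x
    rw [Measure.map_apply hXm measurableSet_Ioi, rvTail, ENNReal.ofReal_toReal (measure_ne_top _ _)]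
    rfl
  have key : ∀ q : ℚ, z < q →
      condDistrib X Y ℙ y (Ioi (q:ℝ)) ≤ ENNReal.ofReal ((1 + ε) * h y) * (Measure.map X ℙ) (Ioi (q:ℝ)) ∧
      ENNReal.ofReal ((1 - ε) * h y) * (Measure.map X ℙ) (Ioi (q:ℝ)) ≤ condDistrib X Y ℙ y (Ioi (q:ℝ)) := by
    intro q hq
    have hq1 : x1 ≤ (q:ℝ) := (le_max_left _ _).trans (hz.trans hq.le)
    have hq2 : (0:ℝ) < q := lt_of_lt_of_le one_pos ((le_max_right x1 _).trans (hz.trans hq.le))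
    have hb := hx1 q hq1 y hy
    have hT := hFunb q hq2
    have hp : 0 < h y * rvTail X q := mul_pos hhy hT
    rw [abs_lt] at hb
    obtain ⟨hb1, hb2⟩ := hb
    have hb1 : 1 - ε < K q y / (h y * rvTail X q) := by linarith
    have hb2 : K q y / (h y * rvTail X q) < 1 + ε := by linarith
    rw [lt_div_iff₀ hp] at hb1
    rw [div_lt_iff₀ hp] at hb2
    have hk : condDistrib X Y ℙ y (Ioi (q:ℝ)) = ENNReal.ofReal (K q y) := by
      rw [hK q, ENNReal.ofReal_toReal (measure_ne_top _ _)]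
    rw [hk, hFt, ← ENNReal.ofReal_mul (by nlinarith), ← ENNReal.ofReal_mul (by nlinarith)]
    exact ⟨ENNReal.ofReal_le_ofReal (by linarith), ENNReal.ofReal_le_ofReal (by linarith)⟩
  constructor
  · refine tail_le_of_rat _ _ _ (fun q hq => (key q hq).1.trans ?_)
    gcongr
  · have := tail_le_of_rat (ENNReal.ofReal ((1 - ε) * h y) • (Measure.map X ℙ)) z
      (condDistrib X Y ℙ y (Ioi z)) (fun q hq => by
        rw [Measure.smul_apply, smul_eq_mul]
        exact (key q hq).2.trans (measure_mono (Ioi_subset_Ioi hq.le)))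
    rwa [Measure.smul_apply, smul_eq_mul] at this

theorem H_tail {Ω : Type*} [MeasureSpace Ω] [IsProbabilityMeasure (ℙ : Measure Ω)]
    (X Y : Ω → ℝ) (hXm : Measurable X) (hYm : Measurable Y) (hYnonneg : ∀ ω, 0 ≤ Y ω)
    (x : ℝ) (hx : 0 ≤ x) :
    (Measure.map (fun ω => X ω * Y ω) ℙ) (Ioi x) =
      ∫⁻ y in Ioi 0, condDistrib X Y ℙ y (Ioi (x / y)) ∂(Measure.map Y ℙ) := by
  have hG0 : ∀ᵐ y ∂(Measure.map Y (ℙ : Measure Ω)), 0 ≤ y :=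
    (ae_map_iff hYm.aemeasurable measurableSet_Ici).2 (Eventually.of_forall hYnonneg)
  have hms : MeasurableSet {p : ℝ × ℝ | x < p.2 * p.1} :=
    measurableSet_lt measurable_const (measurable_snd.mul measurable_fst)
  have h1 : (Measure.map (fun ω => X ω * Y ω) ℙ) (Ioi x) =
      (Measure.map (fun ω => (Y ω, X ω)) ℙ) {p : ℝ × ℝ | x < p.2 * p.1} := by
    rw [Measure.map_apply (f := fun ω => X ω * Y ω) (hXm.mul hYm) measurableSet_Ioi, Measure.map_apply (hYm.prodMk hXm) hms]
    rfl
  rw [h1, ← compProd_map_condDistrib hXm.aemeasurable, Measure.compProd_apply hms,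
    ← lintegral_indicator measurableSet_Ioi]
  refine lintegral_congr_ae ?_
  filter_upwards [hG0] with y hy
  have h2 : Prod.mk y ⁻¹' {p : ℝ × ℝ | x < p.2 * p.1} = {u | x < u * y} := rfl
  rw [h2, section_mul_lt hx hy]
  by_cases h0 : 0 < y
  · simp [h0]
  · simp [h0]

theorem W_tail (F G : Measure ℝ) [IsProbabilityMeasure F] [IsFiniteMeasure G] (h : ℝ → ℝ)
    (hm : Measurable h) [IsFiniteMeasure (G.withDensity (fun y => ENNReal.ofReal (h y)))]
    (hG : ∀ᵐ y ∂G, 0 ≤ y) (x : ℝ) (hx : 0 ≤ x) :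
    prodLaw F (G.withDensity (fun y => ENNReal.ofReal (h y))) (Ioi x) =
      ∫⁻ y in Ioi 0, ENNReal.ofReal (h y) * F (Ioi (x / y)) ∂G := by
  have hF : Measurable (fun y => F (Ioi (x / y))) := by
    simpa using measurable_tail_div F x 0
  rw [prodLaw_Ioi F _ ((withDensity_absolutelyContinuous _ _).ae_le hG) hx,
    setLIntegral_withDensity_eq_setLIntegral_mul _ hm.ennreal_ofReal hF measurableSet_Ioi]
  rfl

theorem h_bdd (F G : Measure ℝ) [IsProbabilityMeasure F] (κ : Kernel ℝ ℝ) [IsMarkovKernel κ] (h : ℝ → ℝ)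
    (hF : ∀ x, F (Ioi x) ≠ 0) (hk : KB F G κ h) :
    ∃ C : ℝ, 0 < C ∧ ∀ᵐ y ∂G, h y ≤ C := by
  obtain ⟨x0, hx0, hb⟩ := hk (1/2) (by norm_num) (by norm_num)
  have hp : 0 < F.real (Ioi x0) := by
    rw [measureReal_def]; exact ENNReal.toReal_pos (hF x0) (measure_ne_top _ _)
  refine ⟨2 / F.real (Ioi x0), by positivity, ?_⟩
  filter_upwards [hb] with y hy
  have h1 := (hy x0 le_rfl).2.trans prob_le_one
  rw [← ofReal_measureReal, ← ENNReal.ofReal_mul' hp.le, ENNReal.ofReal_le_one] at h1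
  rw [le_div_iff₀ hp]
  linarith

theorem HW_upper (F G : Measure ℝ) [IsProbabilityMeasure F] [IsFiniteMeasure G] (κ : Kernel ℝ ℝ)
    [IsMarkovKernel κ] (h : ℝ → ℝ) (hm : Measurable h) (hk : KB F G κ h) (ε : ℝ) (hε : 0 < ε) (hε1 : ε < 1) :
    ∃ b : ℝ, 0 < b ∧ ∀ x, 0 ≤ x →
      (∫⁻ y in Ioi 0, κ y (Ioi (x / y)) ∂G ≤
        ENNReal.ofReal (1 + ε) * (∫⁻ y in Ioi 0, ENNReal.ofReal (h y) * F (Ioi (x / y)) ∂G)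
          + G (Ioi (b * x))) ∧
      (ENNReal.ofReal (1 - ε) * (∫⁻ y in Ioi 0, ENNReal.ofReal (h y) * F (Ioi (x / y)) ∂G) ≤
        ∫⁻ y in Ioi 0, κ y (Ioi (x / y)) ∂G
          + (G.withDensity (fun y => ENNReal.ofReal (h y))) (Ioi (b * x))) := by
  obtain ⟨x0, hx0, hb⟩ := hk ε hε hε1
  refine ⟨1 / x0, by positivity, fun x hx => ?_⟩
  have hF : Measurable (fun y => F (Ioi (x / y))) := by
    simpa using measurable_tail_div F x 0
  have hhm : Measurable (fun y => ENNReal.ofReal (h y)) := hm.ennreal_ofReal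
  have hhF : Measurable (fun y => ENNReal.ofReal (h y) * F (Ioi (x / y))) := hhm.mul hF
  have hdiv : ∀ y : ℝ, 0 < y → ¬ (1 / x0 * x < y) → x0 ≤ x / y := by
    intro y hy hyx
    push Not at hyx
    rw [le_div_iff₀ hy]
    calc x0 * y ≤ x0 * (1 / x0 * x) := by gcongr
      _ = x := by field_simp
  constructor
  · calc ∫⁻ y in Ioi 0, κ y (Ioi (x / y)) ∂G
        ≤ ∫⁻ y in Ioi 0, (ENNReal.ofReal (1 + ε) * (ENNReal.ofReal (h y) * F (Ioi (x / y))) +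
            (Ioi (1 / x0 * x)).indicator 1 y) ∂G := by
          refine lintegral_mono_ae ?_
          filter_upwards [ae_restrict_of_ae hb, ae_restrict_mem measurableSet_Ioi] with y hy hy0
          by_cases hyx : 1 / x0 * x < y
          · rw [indicator_of_mem (show y ∈ Ioi (1 / x0 * x) from hyx)]
            exact prob_le_one.trans le_add_self
          · refine le_trans ?_ le_self_add
            refine ((hy _ (hdiv y hy0 hyx)).1).trans ?_
            rw [ENNReal.ofReal_mul (by linarith), mul_assoc]
      _ = ENNReal.ofReal (1 + ε) * (∫⁻ y in Ioi 0, ENNReal.ofReal (h y) * F (Ioi (x / y)) ∂G)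
          + G (Ioi (1 / x0 * x) ∩ Ioi 0) := by
          rw [lintegral_add_right _ (measurable_one.indicator measurableSet_Ioi),
            lintegral_const_mul _ hhF, lintegral_indicator_one measurableSet_Ioi,
            Measure.restrict_apply measurableSet_Ioi]
      _ ≤ _ := by
          gcongr
          exact inter_subset_left
  · calc ENNReal.ofReal (1 - ε) * (∫⁻ y in Ioi 0, ENNReal.ofReal (h y) * F (Ioi (x / y)) ∂G)
        = ∫⁻ y in Ioi 0, ENNReal.ofReal (1 - ε) * (ENNReal.ofReal (h y) * F (Ioi (x / y))) ∂G := by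
          rw [lintegral_const_mul _ hhF]
      _ ≤ ∫⁻ y in Ioi 0, (κ y (Ioi (x / y)) +
            (Ioi (1 / x0 * x)).indicator (fun y => ENNReal.ofReal (h y)) y) ∂G := by
          refine lintegral_mono_ae ?_
          filter_upwards [ae_restrict_of_ae hb, ae_restrict_mem measurableSet_Ioi] with y hy hy0
          by_cases hyx : 1 / x0 * x < y
          · rw [indicator_of_mem (show y ∈ Ioi (1 / x0 * x) from hyx)]
            refine le_trans ?_ le_add_self
            calc ENNReal.ofReal (1 - ε) * (ENNReal.ofReal (h y) * F (Ioi (x / y)))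
                ≤ 1 * (ENNReal.ofReal (h y) * 1) := by
                  gcongr
                  · rw [ENNReal.ofReal_le_one]; linarith
                  · exact prob_le_one
              _ = _ := by simp
          · refine le_trans ?_ le_self_add
            refine le_trans ?_ ((hy _ (hdiv y hy0 hyx)).2)
            rw [ENNReal.ofReal_mul (by linarith), mul_assoc]
      _ = (∫⁻ y in Ioi 0, κ y (Ioi (x / y)) ∂G) +
            ∫⁻ y in Ioi 0, (Ioi (1 / x0 * x)).indicator (fun y => ENNReal.ofReal (h y)) y ∂G := by
          rw [lintegral_add_right _ (hhm.indicator measurableSet_Ioi)]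
      _ ≤ _ := by
          gcongr
          refine (setLIntegral_le_lintegral _ _).trans ?_
          rw [lintegral_indicator measurableSet_Ioi, withDensity_apply _ measurableSet_Ioi]



theorem le_ofReal_mul_iff (μ ν : Measure ℝ) [IsFiniteMeasure μ] [IsFiniteMeasure ν] (s t : Set ℝ) (c : ℝ)
    (hc : 0 ≤ c) : μ s ≤ ENNReal.ofReal c * ν t ↔ μ.real s ≤ c * ν.real t := by
  rw [← ofReal_measureReal, ← ofReal_measureReal (μ := ν), ← ENNReal.ofReal_mul hc,
    ENNReal.ofReal_le_ofReal_iff (by positivity)]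

/-- Comparability of tails with constants arbitrarily close to one. -/
def TEq (H W : Measure ℝ) : Prop :=
  ∀ c : ℝ, 1 < c → (∀ᶠ x in atTop, H.real (Ioi x) ≤ c * W.real (Ioi x)) ∧
    (∀ᶠ x in atTop, W.real (Ioi x) ≤ c * H.real (Ioi x))

theorem TEq_of (H W G G' : Measure ℝ) [IsFiniteMeasure H] [IsFiniteMeasure W] [IsFiniteMeasure G]
    [IsFiniteMeasure G'] (C : ℝ) (hC : 0 < C) (hGG : ∀ x, G' (Ioi x) ≤ ENNReal.ofReal C * G (Ioi x))
    (hS : SmallG G H)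
    (hb : ∀ ε : ℝ, 0 < ε → ε < 1 → ∃ b : ℝ, 0 < b ∧ ∀ x, 0 ≤ x →
      H (Ioi x) ≤ ENNReal.ofReal (1 + ε) * W (Ioi x) + G (Ioi (b * x)) ∧
      ENNReal.ofReal (1 - ε) * W (Ioi x) ≤ H (Ioi x) + G' (Ioi (b * x))) : TEq H W := by
  intro c hc
  set ε := (c - 1) / (c + 1) with hεd
  have hε : 0 < ε := div_pos (by linarith) (by linarith)
  have hε1 : ε < 1 := by rw [hεd, div_lt_one (by linarith)]; linarith
  have hce : 1 + ε = c * (1 - ε) := by rw [hεd]; field_simp; ring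
  obtain ⟨b, hb0, hb⟩ := hb ε hε hε1
  have hbr : ∀ x, 0 ≤ x → H.real (Ioi x) ≤ (1 + ε) * W.real (Ioi x) + G.real (Ioi (b * x)) ∧
      (1 - ε) * W.real (Ioi x) ≤ H.real (Ioi x) + G'.real (Ioi (b * x)) := by
    intro x hx
    obtain ⟨h1, h2⟩ := hb x hx
    rw [← ofReal_measureReal (μ := H), ← ofReal_measureReal (μ := W), ← ofReal_measureReal (μ := G)] at h1
    rw [← ofReal_measureReal (μ := H), ← ofReal_measureReal (μ := W), ← ofReal_measureReal (μ := G')] at h2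
    rw [← ENNReal.ofReal_mul (by linarith), ← ENNReal.ofReal_add (by positivity) (by positivity),
      ENNReal.ofReal_le_ofReal_iff (by positivity)] at h1
    rw [← ENNReal.ofReal_mul (by linarith), ← ENNReal.ofReal_add (by positivity) (by positivity),
      ENNReal.ofReal_le_ofReal_iff (by positivity)] at h2
    exact ⟨h1, h2⟩
  have hGr : ∀ x, G'.real (Ioi x) ≤ C * G.real (Ioi x) := fun x =>
    (le_ofReal_mul_iff _ _ _ _ _ hC.le).1 (hGG x)
  constructor
  · filter_upwards [hS b hb0 ε hε, eventually_ge_atTop 0] with x h1 h2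
    rw [le_ofReal_mul_iff _ _ _ _ _ hε.le] at h1
    have h3 := (hbr x h2).1
    rw [hce] at h3
    refine le_of_mul_le_mul_left ?_ (show 0 < 1 - ε by linarith)
    linarith
  · filter_upwards [hS b hb0 (ε / C) (by positivity), eventually_ge_atTop 0] with x h1 h2
    rw [le_ofReal_mul_iff _ _ _ _ _ (by positivity)] at h1
    have h3 := (hbr x h2).2
    have h4 := hGr (b * x)
    have h5 : C * G.real (Ioi (b * x)) ≤ ε * H.real (Ioi x) := by
      calc C * G.real (Ioi (b * x)) ≤ C * (ε / C * H.real (Ioi x)) := by gcongr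
        _ = ε * H.real (Ioi x) := by field_simp
    refine le_of_mul_le_mul_left ?_ (show 0 < 1 - ε by linarith)
    have h6 : (1 - ε) * (c * H.real (Ioi x)) = (1 + ε) * H.real (Ioi x) := by rw [hce]; ring
    rw [h6]
    linarith

theorem TEq.tendsto {H W : Measure ℝ} [IsFiniteMeasure H] [IsFiniteMeasure W]
    (hE : TEq H W) (hW : ∀ x, W (Ioi x) ≠ 0) :
    Tendsto (fun x => H.real (Ioi x) / W.real (Ioi x)) atTop (nhds 1) := by
  have hp : ∀ x, 0 < W.real (Ioi x) := fun x => ENNReal.toReal_pos (hW x) (measure_ne_top _ _)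
  rw [tendsto_order]
  constructor
  · intro a ha
    have hm0 : 0 ≤ max a 0 := le_max_right _ _
    have hm1 : max a 0 < 1 := max_lt ha one_pos
    filter_upwards [(hE (2 / (1 + max a 0)) (by rw [lt_div_iff₀ (by linarith)]; linarith)).2] with x hx
    rw [lt_div_iff₀ (hp x)]
    have h1 : (1 + max a 0) * W.real (Ioi x) ≤ 2 * H.real (Ioi x) := by
      rw [div_mul_eq_mul_div, le_div_iff₀ (by linarith)] at hx
      linarith
    have h2 : a * W.real (Ioi x) ≤ max a 0 * W.real (Ioi x) := by
      gcongr
      · exact le_max_left _ _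
    nlinarith [hp x]
  · intro b hb
    filter_upwards [(hE ((1 + b) / 2) (by linarith)).1] with x hx
    rw [div_lt_iff₀ (hp x)]
    nlinarith [hp x]

theorem TEq.pos {H W : Measure ℝ} [IsFiniteMeasure H] [IsFiniteMeasure W]
    (hE : TEq H W) (hW : ∀ x, W (Ioi x) ≠ 0) (x : ℝ) : H (Ioi x) ≠ 0 := by
  intro h0
  obtain ⟨z, hz1, hz2⟩ := ((hE 2 (by norm_num)).2.and (eventually_ge_atTop x)).exists
  have h1 : H (Ioi z) = 0 := measure_mono_null (Ioi_subset_Ioi hz2) h0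
  have hp : 0 < W.real (Ioi z) := ENNReal.toReal_pos (hW z) (measure_ne_top _ _)
  rw [measureReal_def (μ := H), h1] at hz1
  simp at hz1
  linarith

theorem TEq.LgP {H W : Measure ℝ} [IsFiniteMeasure H] [IsFiniteMeasure W] {g : ℝ}
    (hE : TEq H W) (hL : LgP W g) : LgP H g := by
  have hW := hL.1
  have hH := hE.pos hW
  refine LgP_of_ratio H hH ?_
  intro t ht
  have h1 := hE.tendsto hW
  have h2 : Tendsto (fun x => H.real (Ioi (x - t)) / W.real (Ioi (x - t))) atTop (nhds 1) :=
    h1.comp (tendsto_atTop_add_const_right _ (-t) tendsto_id)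
  have h3 := (h2.mul (hL.ratio t)).div h1 one_ne_zero
  rw [one_mul, div_one] at h3
  refine h3.congr (fun x => ?_)
  have hp1 : W.real (Ioi x) ≠ 0 := (ENNReal.toReal_pos (hW x) (measure_ne_top _ _)).ne'
  have hp2 : W.real (Ioi (x - t)) ≠ 0 := (ENNReal.toReal_pos (hW _) (measure_ne_top _ _)).ne'
  have hp3 : H.real (Ioi x) ≠ 0 := (ENNReal.toReal_pos (hH x) (measure_ne_top _ _)).ne'
  simp only [Pi.div_apply]
  field_simp

theorem equiv_ratio_iff (u T : ℝ → ℝ) (a : ℝ) (ha : a ≠ 0) (hT : ∀ᶠ x in atTop, T x ≠ 0) :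
    (u ~[atTop] fun x => a * T x) ↔ Tendsto (fun x => u x / T x) atTop (nhds a) := by
  have hne : ∀ᶠ x in atTop, (fun x => a * T x) x ≠ 0 := hT.mono (fun x hx => mul_ne_zero ha hx)
  rw [isEquivalent_iff_tendsto_one hne]
  constructor
  · intro h
    have := h.mul_const a
    rw [one_mul] at this
    refine this.congr (fun x => ?_)
    simp only [Pi.div_apply]
    rw [div_mul_eq_mul_div, mul_comm (u x), mul_div_mul_left _ _ ha]
  · intro h
    have := h.div_const a
    rw [div_self ha] at this
    refine this.congr (fun x => ?_)
    simp only [Pi.div_apply]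
    rw [div_div, mul_comm (T x)]



theorem rvTail_eq {Ω : Type*} [MeasureSpace Ω] (Z : Ω → ℝ) (hZ : Measurable Z) (x : ℝ) :
    rvTail Z x = (Measure.map Z ℙ).real (Ioi x) := by
  rw [measureReal_def, Measure.map_apply hZ measurableSet_Ioi]; rfl

theorem exp_int_pos {Ω : Type*} [MeasureSpace Ω] [IsProbabilityMeasure (ℙ : Measure Ω)]
    (Z : Ω → ℝ) (hZ : Measurable Z) (γ : ℝ)
    (hi : Integrable (fun y => Real.exp (γ * y)) (Measure.map Z ℙ)) :
    2 * ∫ y, Real.exp (γ * y) ∂(Measure.map Z ℙ) ≠ 0 := by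
  have : IsProbabilityMeasure (Measure.map Z (ℙ : Measure Ω)) :=
    Measure.isProbabilityMeasure_map hZ.aemeasurable
  have := integral_exp_pos hi
  positivity

theorem memS_iff {Ω : Type*} [MeasureSpace Ω] [IsProbabilityMeasure (ℙ : Measure Ω)]
    (Z : Ω → ℝ) (hZ : Measurable Z) (γ : ℝ) (hγ : 0 ≤ γ) :
    MemSGamma Z γ ↔ LgP (Measure.map Z ℙ) γ ∧ JcP (Measure.map Z ℙ) := by
  have hp : IsProbabilityMeasure (Measure.map Z (ℙ : Measure Ω)) :=
    Measure.isProbabilityMeasure_map hZ.aemeasurable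
  have hT : rvTail Z = fun x => (Measure.map Z ℙ).real (Ioi x) := funext (rvTail_eq Z hZ)
  constructor
  · rintro ⟨⟨hU, hL⟩, hi, hc⟩
    have h0 : ∀ x, (Measure.map Z (ℙ : Measure Ω)) (Ioi x) ≠ 0 := by
      intro x hx
      have h1 := hU (max x 1) (by positivity)
      rw [hT] at h1
      have h2 : (Measure.map Z (ℙ : Measure Ω)) (Ioi (max x 1)) = 0 :=
        measure_mono_null (Ioi_subset_Ioi (le_max_left _ _)) hx
      simp only [measureReal_def] at h1
      rw [h2] at h1
      simp at h1
    have h0' : ∀ᶠ x in atTop, rvTail Z x ≠ 0 := by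
      filter_upwards [eventually_gt_atTop 0] with x hx
      exact (hU x hx).ne'
    have hLg : LgP (Measure.map Z ℙ) γ := by
      refine LgP_of_ratio _ h0 (fun t ht => ?_)
      have := (equiv_ratio_iff _ _ _ (Real.exp_pos _).ne' h0').1 (hL t ht)
      rw [hT] at this
      exact this
    refine ⟨hLg, JcP_of_conv _ hLg hi ?_⟩
    have := (equiv_ratio_iff _ _ _ (exp_int_pos Z hZ γ hi) h0').1 hc
    rw [hT] at this
    exact this
  · rintro ⟨hL, hJ⟩
    obtain ⟨hi, hc⟩ := conv_of_JcP _ hγ hL hJ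
    have hU : ∀ x, 0 < rvTail Z x := by
      intro x
      rw [rvTail_eq Z hZ]
      exact ENNReal.toReal_pos (hL.1 x) (measure_ne_top _ _)
    have h0' : ∀ᶠ x in atTop, rvTail Z x ≠ 0 := Eventually.of_forall (fun x => (hU x).ne')
    refine ⟨⟨fun x _ => hU x, fun t ht => ?_⟩, hi, ?_⟩
    · rw [equiv_ratio_iff _ _ _ (Real.exp_pos _).ne' h0', hT]
      exact hL.ratio t
    · rw [equiv_ratio_iff _ _ _ (exp_int_pos Z hZ γ hi) h0', hT]
      exact hc

theorem beta_facts {Ω : Type*} [MeasureSpace Ω] [IsProbabilityMeasure (ℙ : Measure Ω)]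
    (Y : Ω → ℝ) (hYm : Measurable Y) (hYnonneg : ∀ ω, 0 ≤ Y ω) (hYnd : ℙ {ω | Y ω = 0} ≠ 1) (γ : ℝ) :
    ∃ q : ℝ, 0 ≤ q ∧ gammaOverBeta Y γ = γ * q ∧ (∀ᵐ y ∂(Measure.map Y ℙ), q * y ≤ 1) ∧
      ∀ r > q, ∃ M > 0, 1 / M < r ∧ (Measure.map Y (ℙ : Measure Ω)) (Ioi M) ≠ 0 := by
  have hp : IsProbabilityMeasure (Measure.map Y (ℙ : Measure Ω)) :=
    Measure.isProbabilityMeasure_map hYm.aemeasurable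
  set S := {y : ℝ | 0 < rvTail Y y} with hS
  have hmS : ∀ y, y ∈ S ↔ (Measure.map Y (ℙ : Measure Ω)) (Ioi y) ≠ 0 := by
    intro y
    show 0 < rvTail Y y ↔ _
    rw [rvTail_eq Y hYm, measureReal_def, ENNReal.toReal_pos_iff]
    simp [pos_iff_ne_zero, measure_lt_top]
  have hG0 : (Measure.map Y (ℙ : Measure Ω)) (Ioi 0) ≠ 0 := by
    intro h0
    apply hYnd
    rw [Measure.map_apply hYm measurableSet_Ioi] at h0
    have h1 : ∀ᵐ ω ∂(ℙ : Measure Ω), ω ∈ {ω | Y ω = 0} := by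
      filter_upwards [measure_eq_zero_iff_ae_notMem.1 h0] with ω hω
      exact le_antisymm (not_lt.1 hω) (hYnonneg ω)
    have h2 : ({ω | Y ω = 0} : Set Ω) =ᵐ[ℙ] univ := eventuallyEq_univ.2 h1
    rw [measure_congr h2, measure_univ]
  obtain ⟨y0, hy0, hy0S⟩ : ∃ y0 : ℝ, 0 < y0 ∧ y0 ∈ S := by
    by_contra hcon
    push Not at hcon
    apply hG0
    refine le_antisymm (tail_le_of_rat _ _ _ (fun q hq => ?_)) (zero_le)
    have := hcon q hq
    rw [hmS, not_not] at this
    exact this.le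
  by_cases hB : BddAbove S
  · have hβ : 0 < sSup S := lt_of_lt_of_le hy0 (le_csSup hB hy0S)
    refine ⟨1 / sSup S, by positivity, ?_, ?_, ?_⟩
    · rw [gammaOverBeta, if_pos hB]; ring
    · have hz : (Measure.map Y (ℙ : Measure Ω)) (Ioi (sSup S)) = 0 := by
        refine le_antisymm (tail_le_of_rat _ _ _ (fun q hq => ?_)) (zero_le)
        by_contra hne
        have : (q:ℝ) ∈ S := (hmS _).2 (fun h0 => hne h0.le)
        exact absurd (le_csSup hB this) (not_le.2 hq)
      filter_upwards [measure_eq_zero_iff_ae_notMem.1 hz] with y hy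
      rw [div_mul_eq_mul_div, one_mul, div_le_one hβ]
      exact not_lt.1 hy
    · intro r hr
      have hr0 : 0 < r := lt_trans (by positivity) hr
      have : 1 / r < sSup S := by
        rw [gt_iff_lt, div_lt_iff₀ hβ] at hr
        rw [div_lt_iff₀ hr0]; linarith
      obtain ⟨M, hM, hM2⟩ := exists_lt_of_lt_csSup ⟨y0, hy0S⟩ this
      have hM0 : 0 < M := lt_trans (by positivity) hM2
      refine ⟨M, hM0, ?_, (hmS M).1 hM⟩
      rw [div_lt_iff₀ hr0] at hM2
      rw [div_lt_iff₀ hM0]; linarith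
  · refine ⟨0, le_rfl, ?_, ?_, ?_⟩
    · rw [gammaOverBeta, if_neg hB, mul_zero]
    · simp
    · intro r hr
      obtain ⟨M, hM, hM2⟩ := not_bddAbove_iff.1 hB (1 / r)
      have hr0 : 0 < r := hr
      have hM0 : 0 < M := lt_trans (by positivity) hM2
      refine ⟨M, hM0, ?_, (hmS M).1 hM⟩
      rw [div_lt_iff₀ hr0] at hM2
      rw [div_lt_iff₀ hM0]; linarith

theorem final_core (F G H : Measure ℝ) [IsProbabilityMeasure F] [IsProbabilityMeasure G]
    [IsProbabilityMeasure H] (κ : Kernel ℝ ℝ) [IsMarkovKernel κ] (h : ℝ → ℝ) (hm : Measurable h)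
    (hh : ∀ y, 0 ≤ y → 0 < h y) (hG0 : ∀ᵐ y ∂G, 0 ≤ y) (hKB : KB F G κ h)
    (hHt : ∀ x, 0 ≤ x → H (Ioi x) = ∫⁻ y in Ioi 0, κ y (Ioi (x / y)) ∂G)
    (γ q : ℝ) (hγ : 0 ≤ γ) (hq : 0 ≤ q) (hL : LgP F γ) (hJ : JcP F) (hSH : SmallG G H)
    (hq1 : ∀ᵐ y ∂G, q * y ≤ 1) (hq2 : ∀ r > q, ∃ M > 0, 1 / M < r ∧ G (Ioi M) ≠ 0) :
    LgP H (γ * q) ∧ JcP H := by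
  obtain ⟨C, hC, hhC⟩ := h_bdd F G κ h hL.1 hKB
  set G' := G.withDensity (fun y => ENNReal.ofReal (h y)) with hG'
  have hGs : ∀ s, MeasurableSet s → G' s ≤ ENNReal.ofReal C * G s := by
    intro s hs
    rw [hG', withDensity_apply _ hs, ← setLIntegral_const]
    refine lintegral_mono_ae ?_
    filter_upwards [ae_restrict_of_ae hhC] with y hy
    exact ENNReal.ofReal_le_ofReal hy
  have hfin : IsFiniteMeasure G' := ⟨lt_of_le_of_lt (hGs univ MeasurableSet.univ)
    (ENNReal.mul_lt_top ENNReal.ofReal_lt_top (measure_lt_top _ _))⟩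
  have hac : G' ≪ G := withDensity_absolutelyContinuous _ _
  have hac' : G ≪ G' := by
    refine withDensity_absolutelyContinuous' hm.ennreal_ofReal.aemeasurable ?_
    filter_upwards [hG0] with y hy
    exact (ENNReal.ofReal_pos.2 (hh y hy)).ne'
  have hWt := W_tail F G h hm hG0
  rw [← hG'] at hWt
  have hE : TEq H (prodLaw F G') := by
    refine TEq_of H _ G G' C hC (fun x => hGs _ measurableSet_Ioi) hSH ?_
    intro ε hε hε1
    obtain ⟨b, hb, hb2⟩ := HW_upper F G κ h hm hKB ε hε hε1
    refine ⟨b, hb, fun x hx => ?_⟩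
    rw [hHt x hx, hWt x hx]
    exact hb2 x hx
  have hE1 : ∀ᶠ x in atTop, H (Ioi x) ≤ ENNReal.ofReal 2 * prodLaw F G' (Ioi x) := by
    filter_upwards [(hE 2 (by norm_num)).1] with x hx
    rwa [le_ofReal_mul_iff _ _ _ _ _ (by norm_num)]
  have hE2 : ∀ᶠ x in atTop, prodLaw F G' (Ioi x) ≤ ENNReal.ofReal 2 * H (Ioi x) := by
    filter_upwards [(hE 2 (by norm_num)).2] with x hx
    rwa [le_ofReal_mul_iff _ _ _ _ _ (by norm_num)]
  have hSW : SmallG G' (prodLaw F G') := by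
    intro b hb ε hε
    filter_upwards [hSH b hb (ε / (2 * C)) (by positivity), hE1] with x h1 h2
    calc G' (Ioi (b * x)) ≤ ENNReal.ofReal C * G (Ioi (b * x)) := hGs _ measurableSet_Ioi
      _ ≤ ENNReal.ofReal C * (ENNReal.ofReal (ε / (2 * C)) *
            (ENNReal.ofReal 2 * prodLaw F G' (Ioi x))) := by
          gcongr
          exact h1.trans (by gcongr)
      _ = ENNReal.ofReal ε * prodLaw F G' (Ioi x) := by
          rw [← mul_assoc, ← mul_assoc, ← ENNReal.ofReal_mul hC.le,
            ← ENNReal.ofReal_mul (by positivity)]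
          congr 2
          field_simp
  have hLW : LgP (prodLaw F G') (γ * q) := by
    refine LgP_prodLaw F G' (hac.ae_le hG0) hγ hq hL hSW (hac.ae_le hq1) ?_
    intro r hr
    obtain ⟨M, hM, hM1, hM2⟩ := hq2 r hr
    exact ⟨M, hM, hM1, fun h0 => hM2 (hac' h0)⟩
  have hJW : JcP (prodLaw F G') := JcP_prodLaw F G' (hac.ae_le hG0) γ hL hJ hSW
  exact ⟨hE.LgP hLW, JcP_transfer H _ 2 2 (by norm_num) (by norm_num) hE1 hE2 hJW⟩

theorem product_memS_of_assumption1 {Ω : Type*} [MeasureSpace Ω] [IsProbabilityMeasure (ℙ : Measure Ω)]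
    (X Y : Ω → ℝ) (hXm : Measurable X) (hYm : Measurable Y)
    (hYnonneg : ∀ ω, 0 ≤ Y ω)
    (hFunb : UnboundedDist X)
    (hXnd : ℙ {ω | X ω = 0} ≠ 1) (hYnd : ℙ {ω | Y ω = 0} ≠ 1)
    (h : ℝ → ℝ) (K : ℝ → ℝ → ℝ) (hA1 : Assumption1 X Y h K) (hA2 : Assumption2 X Y)
    (γ : ℝ) (hγ : 0 ≤ γ) (hFS : MemSGamma X γ) :
    MemSGamma (fun ω => X ω * Y ω) (gammaOverBeta Y γ) := by
  have hZm : Measurable (fun ω => X ω * Y ω) := hXm.mul hYm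
  obtain ⟨q, hq, hqe, hq1, hq2⟩ := beta_facts Y hYm hYnonneg hYnd γ
  have hKB := KB_of_assumption1 X Y hXm hYm hYnonneg hFunb h K hA1
  have hHt := H_tail X Y hXm hYm hYnonneg
  rw [hqe, memS_iff _ hZm _ (mul_nonneg hγ hq)]
  rw [memS_iff _ hXm _ hγ] at hFS
  obtain ⟨hL, hJ⟩ := hFS
  have hG0 : ∀ᵐ y ∂(Measure.map Y (ℙ : Measure Ω)), 0 ≤ y :=
    (ae_map_iff hYm.aemeasurable measurableSet_Ici).2 (Eventually.of_forall hYnonneg)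
  have hpF : IsProbabilityMeasure (Measure.map X (ℙ : Measure Ω)) :=
    Measure.isProbabilityMeasure_map hXm.aemeasurable
  have hpG : IsProbabilityMeasure (Measure.map Y (ℙ : Measure Ω)) :=
    Measure.isProbabilityMeasure_map hYm.aemeasurable
  have hpH : IsProbabilityMeasure (Measure.map (fun ω => X ω * Y ω) (ℙ : Measure Ω)) :=
    Measure.isProbabilityMeasure_map hZm.aemeasurable
  have hSH : SmallG (Measure.map Y ℙ) (Measure.map (fun ω => X ω * Y ω) ℙ) := by
    intro b hb ε hε
    filter_upwards [(hA2 b hb).def hε] with x hx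
    rw [le_ofReal_mul_iff _ _ _ _ _ hε.le]
    rw [rvTail_eq Y hYm, rvTail_eq _ hZm, Real.norm_of_nonneg measureReal_nonneg,
      Real.norm_of_nonneg measureReal_nonneg] at hx
    exact hx
  exact final_core _ _ _ (condDistrib X Y ℙ) h hA1.1 hA1.2.1 hG0 hKB hHt γ q hγ hq hL hJ hSH hq1 hq2
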